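/- arXiv:1511.03810 — 3 statements merged into one kernel-verified Lean document; each statement's English description precedes it below -/
import Mathlib

section
/- Let K = ℚ(√−n) with n = p1⋯pk a squarefree positive integer such that all p_i ≡ 1 (mod 4), and let 2^{r1}·d1, 2^{r2}·d2 ∈ D(K) ∩ N(K^×) with d_i | n and r_i ∈ {0,1}. Let 2^r·d = (2^{r1}d1) ⊙ (2^{r2}d2) with d | n and r ∈ {0,1}. For i = 1, 2, let (a_i, b_i, c_i) be a primitive positive integer solution of 2^{r_i}·z² = d_i·x² + (n/d_i)·y², and set C_i = ([c_i/p_1], …, [c_i/p_k])^T ∈ F_2^k. Let 𝔡 be the product of the ramified prime ideals above the primes dividing d, multiplied by the r-th power of the ramified prime above 2, and let R be the Rédei matrix of K. Then [𝔡] ∈ 4A if and only if C_1 + C_2 lies in the column image of R. -/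
open NumberField
open scoped nonZeroDivisors

open Classical in
/-- The additive Legendre symbol `[a/p] ∈ F₂`: `0` if `a` is a square mod `p`, `1` otherwise. -/
noncomputable def aLeg (a : ℤ) (p : ℕ) : ZMod 2 :=
  if IsSquare ((a : ZMod p)) then 0 else 1

/-- The Rédei matrix of `ℚ(√−n)`, `n = p₁⋯p_k` with all `p_i ≡ 1 (mod 4)` (so `D = −4n`):
the `k × (k+1)` matrix over `F₂` with `r_{ij} = [p_j/p_i]` for `i ≠ j`,
`r_{ii} = [(D/p_i)/p_i]`, and last column `[2/p_i]`. -/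
noncomputable def redeiOfN (n k : ℕ) (p : Fin k → ℕ) :
    Matrix (Fin k) (Fin k ⊕ Unit) (ZMod 2) :=
  Matrix.of fun i j =>
    Sum.elim
      (fun j' : Fin k =>
        if i = j' then aLeg ((-4 * (n : ℤ)) / (p i : ℤ)) (p i) else aLeg (p j') (p i))
      (fun _ => aLeg 2 (p i)) j

/-!
Genus theory determines the kernel and the image of multiplication by `2` on the class group `A` of
`ℚ(√-n)`. By Hilbert 90 the `k + 1` ramified primes generate `A[2]`; as their classes satisfy a
nontrivial relation, `#A[2] ≤ 2 ^ k`. The Hilbert symbols `(N I, -n)_p` at the `k` odd ramified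
primes `p` define a homomorphism from `A` to `F₂ ^ k`, surjective by Dirichlet's theorem, so the
bound forces its kernel to be `2A`. Its values on the ramified classes are the columns of the Rédei
matrix. Hence `2g ∈ 4A`, that is `g ∈ A[2] + 2A`, exactly when the genus characters of `g` form a
vector in the column image of that matrix.

For `t = 1` or `2`, a solution of `t c ^ 2 = d a ^ 2 + (n / d) b ^ 2` turns `d a + b √-n` into a
generator of `D C ^ 2`, where `D ^ 2 = (t d)` and `N C = c`. So `[D] = 2g` with `g = -[C]`, whose
genus characters are the Legendre symbols `[c/p]`. The theorem combines the two solutions, since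
`[𝔡] = [D₁] + [D₂]`.
-/

/-! ### Additive Legendre and Hilbert symbols -/

theorem isSquare_mul_iff_of_finite {F : Type*} [Field F] [Finite F] {a b : F} (ha : a ≠ 0)
    (hb : b ≠ 0) : IsSquare (a * b) ↔ (IsSquare a ↔ IsSquare b) := by
  classical
  have := Fintype.ofFinite F
  rw [← quadraticChar_one_iff_isSquare (mul_ne_zero ha hb), ← quadraticChar_one_iff_isSquare ha,
    ← quadraticChar_one_iff_isSquare hb, map_mul]
  rcases quadraticChar_dichotomy ha with h | h <;>
    rcases quadraticChar_dichotomy hb with h' | h' <;> simp [h, h']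

theorem aLeg_eq_zero_iff {a : ℤ} {p : ℕ} : aLeg a p = 0 ↔ IsSquare (a : ZMod p) := by
  simp [aLeg]

theorem aLeg_congr {a b : ℤ} {p : ℕ} (h : (a : ZMod p) = b) : aLeg a p = aLeg b p := by
  rw [aLeg, aLeg, h]

theorem aLeg_mul {p : ℕ} [Fact p.Prime] {a b : ℤ} (ha : ¬(p : ℤ) ∣ a) (hb : ¬(p : ℤ) ∣ b) :
    aLeg (a * b) p = aLeg a p + aLeg b p := by
  rw [← ZMod.intCast_zmod_eq_zero_iff_dvd] at ha hb
  have h := isSquare_mul_iff_of_finite ha hb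
  by_cases h₁ : IsSquare (a : ZMod p) <;> by_cases h₂ : IsSquare (b : ZMod p) <;>
    simp [aLeg, h, h₁, h₂, CharTwo.add_self_eq_zero]

theorem aLeg_sq (a : ℤ) (p : ℕ) : aLeg (a ^ 2) p = 0 := by
  rw [aLeg_eq_zero_iff, Int.cast_pow]
  exact IsSquare.sq _

theorem aLeg_one (p : ℕ) : aLeg 1 p = 0 := by
  simp [aLeg_eq_zero_iff]

theorem aLeg_prod {ι : Type*} {p : ℕ} [Fact p.Prime] {a : ι → ℤ} (s : Finset ι)
    (ha : ∀ i ∈ s, ¬(p : ℤ) ∣ a i) : aLeg (∏ i ∈ s, a i) p = ∑ i ∈ s, aLeg (a i) p := by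
  classical
  have hp : Prime (p : ℤ) := Nat.prime_iff_prime_int.mp Fact.out
  induction s using Finset.induction_on with
  | empty => simp [aLeg_one]
  | insert i s hi ih =>
    obtain ⟨hai, has⟩ := Finset.forall_mem_insert _ _ _ |>.mp ha
    rw [Finset.prod_insert hi, Finset.sum_insert hi, ← ih has,
      aLeg_mul hai (hp.not_dvd_finsetProd has)]

theorem aLeg_neg_one_eq_zero_iff {p : ℕ} [Fact p.Prime] : aLeg (-1) p = 0 ↔ p % 4 ≠ 3 := by
  rw [aLeg_eq_zero_iff, Int.cast_neg, Int.cast_one, ZMod.exists_sq_eq_neg_one_iff]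

theorem aLeg_natCast_comm {p q : ℕ} [Fact p.Prime] [Fact q.Prime] (hp : p % 4 = 1)
    (hq : q ≠ 2) : aLeg p q = aLeg q p := by
  simp only [aLeg, Int.cast_natCast, ZMod.exists_sq_eq_prime_iff_of_mod_four_eq_one hp hq]

theorem exists_not_dvd_aLeg_eq {p : ℕ} [Fact p.Prime] (hp : p ≠ 2) (v : ZMod 2) :
    ∃ u : ℕ, ¬p ∣ u ∧ aLeg u p = v := by
  obtain rfl | rfl : v = 0 ∨ v = 1 := by revert v; decide
  · exact ⟨1, Nat.Prime.not_dvd_one Fact.out, by exact_mod_cast aLeg_one p⟩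
  · obtain ⟨a, ha⟩ := FiniteField.exists_nonsquare (F := ZMod p) (by rwa [ZMod.ringChar_zmod_n])
    refine ⟨a.val, fun h ↦ ha ?_, by simp [aLeg, ha]⟩
    rw [← ZMod.natCast_eq_zero_iff, ZMod.natCast_zmod_val] at h
    exact h ▸ IsSquare.zero

/-- The additive Hilbert symbol `(m, -n)_p ∈ F₂` at a prime `p ≡ 1 (mod 4)` exactly dividing `n`;
as `-1` is a square modulo such a `p`, the unit part `-n / p` enters through `[(n / p)/p]`. -/
noncomputable def addHilbert (n p m : ℕ) : ZMod 2 :=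
  aLeg (ordCompl[p] m : ℕ) p + m.factorization p * aLeg (n / p : ℕ) p

section addHilbert

variable {n p : ℕ}

theorem addHilbert_of_not_dvd {m : ℕ} (h : ¬p ∣ m) : addHilbert n p m = aLeg m p := by
  simp [addHilbert, Nat.factorization_eq_zero_of_not_dvd h]

variable [hp : Fact p.Prime]

theorem addHilbert_mul {a b : ℕ} (ha : a ≠ 0) (hb : b ≠ 0) :
    addHilbert n p (a * b) = addHilbert n p a + addHilbert n p b := by
  have not_dvd {m : ℕ} (hm : m ≠ 0) : ¬(p : ℤ) ∣ (ordCompl[p] m : ℕ) := by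
    exact_mod_cast Nat.not_dvd_ordCompl hp.out hm
  rw [addHilbert, Nat.ordCompl_mul, Nat.factorization_mul ha hb, Nat.cast_mul,
    aLeg_mul (not_dvd ha) (not_dvd hb), Finsupp.add_apply, Nat.cast_add, addHilbert, addHilbert]
  ring

theorem addHilbert_sq {a : ℕ} (ha : a ≠ 0) : addHilbert n p (a ^ 2) = 0 := by
  rw [sq, addHilbert_mul ha ha, CharTwo.add_self_eq_zero]

theorem addHilbert_one : addHilbert n p 1 = 0 := by
  simpa using addHilbert_sq one_ne_zero

theorem addHilbert_self : addHilbert n p p = aLeg (n / p : ℕ) p := by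
  simp [addHilbert, hp.out.factorization_self, Nat.div_self hp.out.pos, aLeg_one]

theorem addHilbert_sq_add_mul_sq_of_coprime (hpn : p ∣ n) (hnp : ¬p ∣ n / p) {x y : ℕ}
    (hxy : x.Coprime y) : addHilbert n p (x ^ 2 + n * y ^ 2) = 0 := by
  obtain ⟨l, rfl⟩ := hpn
  rw [Nat.mul_div_cancel_left _ hp.out.pos] at hnp
  by_cases hx : p ∣ x
  · obtain ⟨x, rfl⟩ := hx
    have hy : ¬p ∣ y := fun hy ↦
      Nat.not_coprime_of_dvd_of_dvd hp.out.one_lt (dvd_mul_right p x) hy hxy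
    have hl : ¬p ∣ l * y ^ 2 := fun h ↦
      (hp.out.dvd_mul.mp h).elim hnp fun h ↦ hy (hp.out.dvd_of_dvd_pow h)
    have hm : ¬p ∣ p * x ^ 2 + l * y ^ 2 := by rwa [Nat.dvd_add_right (dvd_mul_right p _)]
    have hm₀ : p * x ^ 2 + l * y ^ 2 ≠ 0 := fun h ↦ hm (h ▸ dvd_zero p)
    calc addHilbert (p * l) p ((p * x) ^ 2 + p * l * y ^ 2)
        = addHilbert (p * l) p (p * (p * x ^ 2 + l * y ^ 2)) := by ring_nf
      _ = aLeg l p + aLeg (l * y ^ 2 : ℤ) p := by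
        rw [addHilbert_mul hp.out.ne_zero hm₀, addHilbert_self, addHilbert_of_not_dvd hm,
          Nat.mul_div_cancel_left _ hp.out.pos]
        congr 1
        exact aLeg_congr (by simp)
      _ = 0 := by
        rw [aLeg_mul (by exact_mod_cast hnp)
          (by exact_mod_cast fun h ↦ hy (hp.out.dvd_of_dvd_pow h)), aLeg_sq, add_zero,
          CharTwo.add_self_eq_zero]
  · have hm : ¬p ∣ x ^ 2 + p * l * y ^ 2 := by
      rw [mul_assoc, Nat.dvd_add_left (dvd_mul_right p _)]
      exact fun h ↦ hx (hp.out.dvd_of_dvd_pow h)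
    rw [addHilbert_of_not_dvd hm, ← aLeg_sq x p]
    exact aLeg_congr (by simp)

theorem addHilbert_sq_add_mul_sq (hpn : p ∣ n) (hnp : ¬p ∣ n / p) (x y : ℕ) :
    addHilbert n p (x ^ 2 + n * y ^ 2) = 0 := by
  rcases Nat.eq_zero_or_pos (x.gcd y) with h | h
  · obtain ⟨rfl, rfl⟩ := Nat.gcd_eq_zero_iff.mp h
    simp [addHilbert, aLeg]
  · obtain ⟨g, x, y, hg, hxy, rfl, rfl⟩ := Nat.exists_coprime' h
    have hn : n ≠ 0 := by rintro rfl; simp at hnp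
    have hm : x ^ 2 + n * y ^ 2 ≠ 0 := fun h ↦ by
      have : x = 0 ∧ y = 0 := by simpa [hn] using h
      simp [this] at hxy
    rw [show (x * g) ^ 2 + n * (y * g) ^ 2 = g ^ 2 * (x ^ 2 + n * y ^ 2) by ring,
      addHilbert_mul (pow_ne_zero 2 hg.ne') hm, addHilbert_sq hg.ne',
      addHilbert_sq_add_mul_sq_of_coprime hpn hnp hxy, add_zero]

end addHilbert

theorem exists_prime_gt_forall_modEq {ι : Type*} [Finite ι] {m : ι → ℕ} (hm : ∀ i, m i ≠ 0)
    (hco : Pairwise (Function.onFun Nat.Coprime m)) (u : ι → ℕ) (hu : ∀ i, (u i).Coprime (m i))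
    (N : ℕ) : ∃ q > N, q.Prime ∧ ∀ i, q ≡ u i [MOD m i] := by
  have := Fintype.ofFinite ι
  obtain ⟨x, hx⟩ := Nat.chineseRemainderOfFinset u m Finset.univ (fun i _ ↦ hm i)
    fun i _ j _ hij ↦ hco hij
  have hx_coprime : x.Coprime (∏ i, m i) := Nat.Coprime.prod_right fun i hi ↦ by
    rw [Nat.Coprime, (hx i hi).gcd_eq]
    exact hu i
  obtain ⟨q, hqN, hq, hqx⟩ := Nat.forall_exists_prime_gt_and_modEq N
    (Finset.prod_ne_zero_iff.mpr fun i _ ↦ hm i) hx_coprime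
  exact ⟨q, hqN, hq, fun i ↦ (hqx.of_dvd (Finset.dvd_prod_of_mem m (Finset.mem_univ i))).trans
    (hx i (Finset.mem_univ i))⟩

theorem isCoprime_two_mul_of_dvd_sq_add {q n : ℕ} (hq : q.Prime) (hn : n ≠ 0) (hqn : 2 * n < q)
    {s : ℤ} (hs : (q : ℤ) ∣ s ^ 2 + n) : IsCoprime (q : ℤ) (2 * s) := by
  have hq_prime : Prime (q : ℤ) := Nat.prime_iff_prime_int.mp hq
  rw [hq_prime.coprime_iff_not_dvd, hq_prime.dvd_mul, not_or]
  refine ⟨fun h ↦ ?_, fun h ↦ ?_⟩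
  · have := Int.le_of_dvd two_pos h
    omega
  · rw [Int.dvd_add_right (h.trans (dvd_pow_self s two_ne_zero))] at hs
    have := Int.le_of_dvd (by positivity) hs
    omega

/-! ### Prime factorizations and reciprocity -/

/-- The factorization `n = ∏ i, p i` into distinct primes congruent to `1` modulo `4`, on which the
Rédei matrix of `ℚ(√-n)` depends. -/
structure IsRedeiFactorization {ι : Type*} [Fintype ι] (n : ℕ) (p : ι → ℕ) : Prop where
  prime : ∀ i, (p i).Prime
  injective : Function.Injective p
  prod_eq : ∏ i, p i = n
  mod_four : ∀ i, p i % 4 = 1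

namespace IsRedeiFactorization

variable {ι : Type*} [Fintype ι] {n : ℕ} {p : ι → ℕ}

theorem ne_zero (h : IsRedeiFactorization n p) : n ≠ 0 :=
  h.prod_eq ▸ Finset.prod_ne_zero_iff.mpr fun i _ ↦ (h.prime i).ne_zero

theorem dvd (h : IsRedeiFactorization n p) (i : ι) : p i ∣ n :=
  h.prod_eq ▸ Finset.dvd_prod_of_mem p (Finset.mem_univ i)

theorem ne_two (h : IsRedeiFactorization n p) (i : ι) : p i ≠ 2 := by
  have := h.mod_four i
  omega

theorem coprime (h : IsRedeiFactorization n p) : Pairwise (Function.onFun Nat.Coprime p) :=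
  fun i j hij ↦ (Nat.coprime_primes (h.prime i) (h.prime j)).mpr (h.injective.ne hij)

theorem squarefree (h : IsRedeiFactorization n p) : Squarefree n := by
  rw [← h.prod_eq]
  exact Finset.squarefree_prod_of_pairwise_isCoprime
    (fun i _ j _ hij ↦ Nat.coprime_iff_isRelPrime.mp (h.coprime hij))
    fun i _ ↦ (h.prime i).prime.squarefree

theorem not_dvd_div (h : IsRedeiFactorization n p) (i : ι) : ¬p i ∣ n / p i := by
  rw [← (h.prime i).coprime_iff_not_dvd]
  apply Nat.coprime_of_squarefree_mul
  rw [Nat.mul_div_cancel' (h.dvd i)]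
  exact h.squarefree

theorem exists_eq_of_prime_dvd (h : IsRedeiFactorization n p) {q : ℕ} (hq : q.Prime)
    (hqn : q ∣ n) : ∃ i, q = p i := by
  rw [← h.prod_eq, hq.prime.dvd_finsetProd_iff] at hqn
  obtain ⟨i, -, hi⟩ := hqn
  exact ⟨i, (Nat.prime_dvd_prime_iff_eq hq (h.prime i)).mp hi⟩

theorem prod_filter_dvd (h : IsRedeiFactorization n p) {d : ℕ} (hd : d ∣ n) :
    ∏ i with p i ∣ d, p i = d := by
  classical
  have hd_sq : Squarefree d := h.squarefree.squarefree_of_dvd hd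
  have hprimes : d.primeFactors = ({i | p i ∣ d} : Finset ι).image p := by
    ext q
    simp only [Nat.mem_primeFactors, Finset.mem_image, Finset.mem_filter, Finset.mem_univ, true_and]
    constructor
    · rintro ⟨hq, hqd, -⟩
      obtain ⟨i, rfl⟩ := h.exists_eq_of_prime_dvd hq (hqd.trans hd)
      exact ⟨i, hqd, rfl⟩
    · rintro ⟨i, hi, rfl⟩
      exact ⟨h.prime i, hi, hd_sq.ne_zero⟩
  conv_rhs => rw [← Nat.prod_primeFactors_of_squarefree hd_sq, hprimes,
    Finset.prod_image h.injective.injOn]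

theorem mod_four_of_dvd (h : IsRedeiFactorization n p) {d : ℕ} (hd : d ∣ n) : d % 4 = 1 := by
  rw [← h.prod_filter_dvd hd, Finset.prod_nat_mod]
  simp [h.mod_four]

theorem aLeg_neg_eq (h : IsRedeiFactorization n p) {q : ℕ} [Fact q.Prime] (hq : q ≠ 2)
    (hqp : ∀ i, ¬p i ∣ q) : aLeg (-n) q = aLeg (-1) q + ∑ i, aLeg q (p i) := by
  have (i : ι) : Fact (p i).Prime := ⟨h.prime i⟩
  have hpq (i : ι) : ¬(q : ℤ) ∣ p i := by
    rw [Int.natCast_dvd_natCast, Nat.prime_dvd_prime_iff_eq Fact.out Fact.out]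
    exact fun hi ↦ hqp i (dvd_of_eq hi.symm)
  have hq_prime : Prime (q : ℤ) := Nat.prime_iff_prime_int.mp Fact.out
  rw [← neg_one_mul, ← h.prod_eq, Nat.cast_prod,
    aLeg_mul (by rw [dvd_neg]; exact hq_prime.not_dvd_one)
      (hq_prime.not_dvd_finsetProd fun i _ ↦ hpq i), aLeg_prod _ fun i _ ↦ hpq i]
  exact congrArg _ (Finset.sum_congr rfl fun i _ ↦ aLeg_natCast_comm (h.mod_four i) hq)

theorem exists_prime_aLeg_eq_of_modEq (h : IsRedeiFactorization n p) (v : ι → ZMod 2) {w : ℕ}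
    (hw : w.Coprime 4) (N : ℕ) :
    ∃ q > N, q.Prime ∧ q % 4 = w % 4 ∧ (∀ i, ¬p i ∣ q) ∧ ∀ i, aLeg q (p i) = v i := by
  have (i : ι) : Fact (p i).Prime := ⟨h.prime i⟩
  choose u hu huv using fun i ↦ exists_not_dvd_aLeg_eq (h.ne_two i) (v i)
  have four_coprime (i : ι) : Nat.Coprime 4 (p i) := by
    rw [Nat.Coprime, Nat.gcd_rec, h.mod_four i, Nat.gcd_one_left]
  obtain ⟨q, hqN, hq, hqu⟩ := exists_prime_gt_forall_modEq
    (m := fun i : Option ι ↦ i.elim 4 p) (u := fun i : Option ι ↦ i.elim w u)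
    (by rintro (_ | i); exacts [four_ne_zero, (h.prime i).ne_zero])
    (by
      rintro (_ | i) (_ | j) hij
      exacts [absurd rfl hij, four_coprime j, (four_coprime i).symm,
        h.coprime fun hij' ↦ hij (congrArg some hij')])
    (by rintro (_ | i); exacts [hw, ((h.prime i).coprime_iff_not_dvd.mpr (hu i)).symm]) N
  refine ⟨q, hqN, hq, hqu none, fun i ↦ ((hqu (some i)).dvd_iff dvd_rfl).not.mpr (hu i),
    fun i ↦ ?_⟩
  rw [← huv i]
  exact aLeg_congr (by exact_mod_cast (ZMod.natCast_eq_natCast_iff _ _ _).mpr (hqu (some i)))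

theorem exists_prime_aLeg_eq (h : IsRedeiFactorization n p) (v : ι → ZMod 2) (N : ℕ) :
    ∃ q > N, q.Prime ∧ (∀ i, aLeg q (p i) = v i) ∧ ∃ s : ℤ, (q : ℤ) ∣ s ^ 2 + n := by
  suffices H : ∃ q > max N 2, q.Prime ∧ (∀ i, ¬p i ∣ q) ∧ (∀ i, aLeg q (p i) = v i) ∧
      aLeg (-1) q = ∑ i, v i by
    obtain ⟨q, hqN, hq, hpq, hqv, hq_neg⟩ := H
    have := Fact.mk hq
    have hqn : aLeg (-n) q = 0 := by
      rw [h.aLeg_neg_eq (by omega) hpq, hq_neg, Finset.sum_congr rfl fun i _ ↦ hqv i,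
        CharTwo.add_self_eq_zero]
    obtain ⟨s, hs⟩ := aLeg_eq_zero_iff.mp hqn
    refine ⟨q, by omega, hq, hqv, s.val, ?_⟩
    rw [← ZMod.intCast_zmod_eq_zero_iff_dvd]
    push_cast at hs ⊢
    rw [ZMod.natCast_zmod_val, sq, ← hs, neg_add_cancel]
  by_cases hv : ∑ i, v i = 0
  · obtain ⟨q, hqN, hq, hq4, hpq, hqv⟩ :=
      h.exists_prime_aLeg_eq_of_modEq v (w := 1) (by norm_num) (max N 2)
    have := Fact.mk hq
    exact ⟨q, hqN, hq, hpq, hqv, hv ▸ aLeg_neg_one_eq_zero_iff.mpr (by omega)⟩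
  · obtain ⟨q, hqN, hq, hq4, hpq, hqv⟩ :=
      h.exists_prime_aLeg_eq_of_modEq v (w := 3) (by norm_num) (max N 2)
    have := Fact.mk hq
    have hq_neg : aLeg (-1) q ≠ 0 := by rw [Ne, aLeg_neg_one_eq_zero_iff]; omega
    have eq_of_ne_zero : ∀ a b : ZMod 2, a ≠ 0 → b ≠ 0 → a = b := by decide
    exact ⟨q, hqN, hq, hpq, hqv, eq_of_ne_zero _ _ hq_neg hv⟩

end IsRedeiFactorization

/-! ### Abelian groups, ideals and class groups -/

theorem card_range_mul_card_ker {G H : Type*} [AddGroup G] [AddGroup H] (f : G →+ H) :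
    Nat.card f.range * Nat.card f.ker = Nat.card G := by
  rw [← AddSubgroup.index_ker, mul_comm, AddSubgroup.card_mul_index]

theorem ker_eq_range_nsmul_of_card_le {A V : Type*} [AddCommGroup A] [Finite A]
    [AddCommGroup V] {m : ℕ} (hV : ∀ v : V, m • v = 0) {φ : A →+ V} (hφ : Function.Surjective φ)
    (hA : Nat.card (nsmulAddMonoidHom m : A →+ A).ker ≤ Nat.card V) :
    φ.ker = (nsmulAddMonoidHom m : A →+ A).range := by
  have hle : (nsmulAddMonoidHom m : A →+ A).range ≤ φ.ker := by
    rintro _ ⟨a, rfl⟩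
    simp [hV]
  refine (AddSubgroup.eq_of_le_of_card_ge hle ?_).symm
  have hcard := (card_range_mul_card_ker φ).trans
    (card_range_mul_card_ker (nsmulAddMonoidHom m : A →+ A)).symm
  rw [AddMonoidHom.range_eq_top.mpr hφ, AddSubgroup.card_top] at hcard
  have hV_pos : 0 < Nat.card V := by
    have := Finite.of_surjective φ hφ
    exact Nat.card_pos
  refine le_of_mul_le_mul_left (hcard.trans_le ?_) hV_pos
  rw [mul_comm]
  exact Nat.mul_le_mul_right _ hA

theorem two_mul_card_range_le {G H : Type*} [AddGroup G] [Finite G] [AddGroup H] {f : G →+ H}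
    (hf : ¬Function.Injective f) : 2 * Nat.card f.range ≤ Nat.card G := by
  have hker : 1 < Nat.card f.ker := by
    rw [AddSubgroup.one_lt_card_iff_ne_bot]
    exact mt (AddMonoidHom.ker_eq_bot_iff f).mp hf
  rw [← card_range_mul_card_ker f, mul_comm]
  exact Nat.mul_le_mul_left _ hker

theorem exists_nsmul_eq_mul_nsmul_iff {A V W : Type*} [AddCommGroup A] [AddCommGroup V]
    [AddCommGroup W] {m : ℕ} {φ : A →+ V} {ψ : W →+ A}
    (hφ : φ.ker = (nsmulAddMonoidHom m : A →+ A).range)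
    (hψ : ψ.range = (nsmulAddMonoidHom m : A →+ A).ker) (g : A) :
    (∃ a, m • g = (m * m) • a) ↔ ∃ w, φ (ψ w) = φ g := by
  have φ_nsmul (a : A) : φ (m • a) = 0 := hφ.ge ⟨a, rfl⟩
  have nsmul_ψ (w : W) : m • ψ w = 0 := hψ.le ⟨w, rfl⟩
  constructor
  · rintro ⟨a, ha⟩
    have hmem : g - m • a ∈ (nsmulAddMonoidHom m : A →+ A).ker := by
      rw [AddMonoidHom.mem_ker, nsmulAddMonoidHom_apply, nsmul_sub, ha, smul_smul, sub_self]
    obtain ⟨w, hw⟩ := hψ.ge hmem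
    exact ⟨w, by rw [hw, map_sub, φ_nsmul, sub_zero]⟩
  · rintro ⟨w, hw⟩
    obtain ⟨a, ha⟩ : g - ψ w ∈ (nsmulAddMonoidHom m : A →+ A).range := by
      rw [← hφ, AddMonoidHom.mem_ker, map_sub, hw, sub_self]
    rw [nsmulAddMonoidHom_apply] at ha
    refine ⟨a, ?_⟩
    rw [← add_sub_cancel (ψ w) g, ← ha, nsmul_add, nsmul_ψ, zero_add, smul_smul]

/-- The homomorphism `Y ↦ ∑ j, Y j • g j` attached to a family of elements `g j` killed by `N`. -/
def torsionSum {A κ : Type*} [AddCommGroup A] [Fintype κ] {N : ℕ} (g : κ → A)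
    (hg : ∀ j, N • g j = 0) : (κ → ZMod N) →+ A :=
  ∑ j, (ZMod.lift N ⟨zmultiplesHom A (g j), by simp [hg]⟩).comp (Pi.evalAddMonoidHom _ j)

section torsionSum

variable {A κ : Type*} [AddCommGroup A] [Fintype κ] {N : ℕ} {g : κ → A} (hg : ∀ j, N • g j = 0)

theorem torsionSum_intCast (y : κ → ℤ) : torsionSum g hg (Int.cast ∘ y) = ∑ j, y j • g j := by
  simp [torsionSum]

theorem torsionSum_single [DecidableEq κ] (j : κ) : torsionSum g hg (Pi.single j 1) = g j := by
  have : (Pi.single j 1 : κ → ZMod N) = Int.cast ∘ (Pi.single j 1 : κ → ℤ) := by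
    ext i
    by_cases h : i = j <;> simp [h]
  rw [this, torsionSum_intCast]
  simp [Pi.single_apply]

theorem range_torsionSum : (torsionSum g hg).range = AddSubgroup.closure (Set.range g) := by
  classical
  apply le_antisymm
  · rintro _ ⟨Y, rfl⟩
    obtain ⟨y, rfl⟩ := ZMod.intCast_surjective.comp_left Y
    rw [torsionSum_intCast]
    exact sum_mem fun j _ ↦ zsmul_mem (AddSubgroup.subset_closure (Set.mem_range_self j)) _
  · rw [AddSubgroup.closure_le]
    rintro _ ⟨j, rfl⟩
    exact ⟨Pi.single j 1, torsionSum_single hg j⟩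

theorem map_torsionSum {ι : Type*} (φ : A →+ (ι → ZMod N)) (Y : κ → ZMod N) :
    φ (torsionSum g hg Y) = (Matrix.of fun i j ↦ φ (g j) i).mulVec Y := by
  obtain ⟨y, rfl⟩ := ZMod.intCast_surjective.comp_left Y
  ext i
  simp [torsionSum_intCast, Matrix.mulVec, dotProduct, mul_comm]

end torsionSum

section Ideal

variable {R : Type*} [CommRing R]

theorem natCast_gcd_mem {I : Ideal R} {a b : ℕ} (ha : (a : R) ∈ I)
    (hb : (b : R) ∈ I) : ((a.gcd b : ℕ) : R) ∈ I := by
  have hgcd : ((a.gcd b : ℕ) : R) = a * (a.gcdA b : ℤ) + b * (a.gcdB b : ℤ) := by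
    exact_mod_cast congrArg (Int.cast : ℤ → R) (Nat.gcd_eq_gcd_ab a b)
  rw [hgcd]
  exact I.add_mem (I.mul_mem_right _ ha) (I.mul_mem_right _ hb)

theorem mem_nonZeroDivisors_of_sq_eq_span [IsDomain R] {I : Ideal R}
    {x : R} (hx : x ≠ 0) (h : I ^ 2 = Ideal.span {x}) : I ∈ (Ideal R)⁰ := by
  apply mem_nonZeroDivisors_of_ne_zero
  rintro rfl
  rw [zero_pow two_ne_zero, Ideal.zero_eq_bot, eq_comm, Ideal.span_singleton_eq_bot] at h
  exact hx h

theorem span_pair_mul_span_pair_eq {q x y m : R}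
    (hxy : x * y = q * m) (h : Ideal.span {q, x, y, m} = ⊤) :
    Ideal.span {q, x} * Ideal.span {q, y} = Ideal.span {q} := by
  rw [Ideal.span_pair_mul_span_pair, hxy]
  calc Ideal.span {q * q, q * y, x * q, q * m}
      = Ideal.span {q} * Ideal.span {q, x, y, m} := by
        rw [Ideal.span_mul_span', Set.singleton_mul, mul_comm x q]
        simp only [Set.image_insert_eq, Set.image_singleton]
        rw [Set.insert_comm (q * y)]
    _ = Ideal.span {q} := by rw [h, Ideal.mul_top]

theorem span_natCast_pair_sq {ω : R} {n d e : ℕ}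
    (hω : ω ^ 2 = -(n : R)) (hde : d * e = n) (hco : d.Coprime e) :
    Ideal.span {(d : R), ω} ^ 2 = Ideal.span {(d : R)} := by
  rw [sq]
  apply span_pair_mul_span_pair_eq (m := -(e : R))
  · rw [← sq, hω, ← hde]
    push_cast
    ring
  · obtain ⟨u, v, huv⟩ := Nat.isCoprime_iff_coprime.mpr hco
    rw [Ideal.eq_top_iff_one]
    simp only [Ideal.mem_span_insert, Ideal.mem_span_singleton']
    refine ⟨u, _, ⟨0, _, ⟨0, _, ⟨-v, rfl⟩, rfl⟩, rfl⟩, ?_⟩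
    have := congrArg (Int.cast : ℤ → R) huv
    push_cast at this
    linear_combination -this

theorem span_two_one_add_sq {ω : R} {n : ℕ} (hω : ω ^ 2 = -(n : R)) (hn : n % 4 = 1) :
    Ideal.span {((2 : ℕ) : R), 1 + ω} ^ 2 = Ideal.span {((2 : ℕ) : R)} := by
  obtain ⟨l, rfl⟩ : ∃ l, n = 4 * l + 1 := ⟨n / 4, by omega⟩
  push_cast at hω
  rw [sq]
  apply span_pair_mul_span_pair_eq (m := ω - 2 * l)
  · push_cast
    linear_combination hω
  · rw [Ideal.eq_top_iff_one]
    simp only [Ideal.mem_span_insert, Ideal.mem_span_singleton']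
    refine ⟨-l, _, ⟨1, _, ⟨0, _, ⟨-1, rfl⟩, rfl⟩, rfl⟩, ?_⟩
    push_cast
    ring

variable {O : Type*} [CommRing O] [IsDedekindDomain O] [Module.Free ℤ O]

theorem absNorm_map_ringEquiv (σ : O ≃+* O) (I : Ideal O) :
    Ideal.absNorm (I.map σ) = Ideal.absNorm I := by
  rw [Ideal.absNorm_apply, Ideal.absNorm_apply, Submodule.cardQuot_apply, Submodule.cardQuot_apply]
  exact (Nat.card_congr (Ideal.quotientEquiv I (I.map σ) σ rfl).toEquiv).symm

end Ideal

section ClassGroup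

variable {R : Type*} [CommRing R] [IsDedekindDomain R]

theorem mk0_mul_mk0_eq_of_sq_eq_span [CharZero R] {I J L : (Ideal R)⁰}
    {a b m g : ℕ} (hI : (I : Ideal R) ^ 2 = Ideal.span {(a : R)})
    (hJ : (J : Ideal R) ^ 2 = Ideal.span {(b : R)}) (hL : (L : Ideal R) ^ 2 = Ideal.span {(m : R)})
    (hg : g ≠ 0) (h : a * b = m * g ^ 2) :
    ClassGroup.mk0 I * ClassGroup.mk0 J = ClassGroup.mk0 L := by
  rw [← map_mul]
  refine ClassGroup.mk0_eq_mk0_iff.mpr ⟨1, g, one_ne_zero, Nat.cast_ne_zero.mpr hg, ?_⟩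
  apply pow_left_injective two_ne_zero
  beta_reduce
  rw [Submonoid.coe_mul, mul_pow, mul_pow, mul_pow, hI, hJ, hL, Ideal.span_singleton_one,
    Ideal.top_pow, Ideal.top_mul]
  simp only [Ideal.span_singleton_pow, Ideal.span_singleton_mul_span_singleton]
  rw [← Nat.cast_mul, h, Nat.cast_mul, Nat.cast_pow, mul_comm]

variable {M : Type*} [MulOneClass M]

theorem map_eq_map_of_mk0_eq_mk0 (f : (Ideal R)⁰ →* M)
    (hf : ∀ I : (Ideal R)⁰, (I : Ideal R).IsPrincipal → f I = 1) {I J : (Ideal R)⁰}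
    (h : ClassGroup.mk0 I = ClassGroup.mk0 J) : f I = f J := by
  obtain ⟨x, y, hx, hy, hxy⟩ := ClassGroup.mk0_eq_mk0_iff.mp h
  have span_mem {z : R} (hz : z ≠ 0) : Ideal.span {z} ∈ (Ideal R)⁰ :=
    mem_nonZeroDivisors_of_ne_zero (by simpa using hz)
  have map_span_mul {z : R} (hz : z ≠ 0) (L : (Ideal R)⁰) : f (⟨_, span_mem hz⟩ * L) = f L := by
    rw [map_mul, hf _ ⟨z, rfl⟩, one_mul]
  rw [← map_span_mul hx I, ← map_span_mul hy J]
  exact congrArg f (Subtype.ext hxy)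

/-- The homomorphism on the class group induced by a homomorphism on nonzero ideals that is trivial
on principal ideals. -/
noncomputable def classGroupLift (f : (Ideal R)⁰ →* M)
    (hf : ∀ I : (Ideal R)⁰, (I : Ideal R).IsPrincipal → f I = 1) : ClassGroup R →* M where
  toFun c := f (Function.surjInv ClassGroup.mk0_surjective c)
  map_one' := by
    rw [← map_one f]
    exact map_eq_map_of_mk0_eq_mk0 f hf ((Function.surjInv_eq _ _).trans (map_one _).symm)
  map_mul' a b := by
    rw [← map_mul f]
    exact map_eq_map_of_mk0_eq_mk0 f hf (by simp only [map_mul, Function.surjInv_eq])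

theorem classGroupLift_mk0 (f : (Ideal R)⁰ →* M)
    (hf : ∀ I : (Ideal R)⁰, (I : Ideal R).IsPrincipal → f I = 1) (I : (Ideal R)⁰) :
    classGroupLift f hf (ClassGroup.mk0 I) = f I :=
  map_eq_map_of_mk0_eq_mk0 f hf (Function.surjInv_eq _ _)

end ClassGroup

/-! ### Quadratic fields -/

section Quadratic

theorem exists_algEquiv_mul_eq_norm_and_add_eq_trace (F L : Type*) [Field F] [Field L] [Algebra F L]
    [Algebra.IsQuadraticExtension F L] [Algebra.IsSeparable F L] :
    ∃ σ : Gal(L/F), ∀ x, x * σ x = algebraMap F L (Algebra.norm F x) ∧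
      x + σ x = algebraMap F L (Algebra.trace F L x) := by
  classical
  have hcard : Nat.card Gal(L/F) = 2 := by
    rw [IsGalois.card_aut_eq_finrank, Algebra.IsQuadraticExtension.finrank_eq_two]
  have : Nontrivial Gal(L/F) := by
    rw [← Finite.one_lt_card_iff_nontrivial, hcard]
    exact one_lt_two
  obtain ⟨σ, hσ⟩ := exists_ne (1 : Gal(L/F))
  have huniv : (Finset.univ : Finset Gal(L/F)) = {1, σ} :=
    (Finset.eq_univ_of_card _ (by
      rw [Finset.card_pair hσ.symm, ← Nat.card_eq_fintype_card, hcard])).symm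
  refine ⟨σ, fun x ↦ ⟨?_, ?_⟩⟩
  · rw [Algebra.norm_eq_prod_automorphisms, huniv, Finset.prod_pair hσ.symm, AlgEquiv.one_apply]
  · rw [trace_eq_sum_automorphisms, huniv, Finset.sum_pair hσ.symm, AlgEquiv.one_apply]

variable {K : Type*} [Field K] [NumberField K] [Algebra.IsQuadraticExtension ℚ K]

variable (K) in
theorem exists_ringEquiv_mul_eq_norm_and_add_eq_trace : ∃ σ : 𝓞 K ≃+* 𝓞 K, ∀ x,
    x * σ x = (Algebra.norm ℤ x : ℤ) ∧ x + σ x = (Algebra.trace ℤ (𝓞 K) x : ℤ) := by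
  obtain ⟨σ, hσ⟩ := exists_algEquiv_mul_eq_norm_and_add_eq_trace ℚ K
  refine ⟨RingOfIntegers.mapRingEquiv σ.toRingEquiv, fun x ↦ ⟨?_, ?_⟩⟩ <;>
    apply FaithfulSMul.algebraMap_injective (𝓞 K) K
  · rw [map_mul, map_intCast]
    refine (hσ x).1.trans ?_
    rw [← Algebra.coe_norm_int, map_intCast]
  · rw [map_add, map_intCast]
    refine (hσ x).2.trans ?_
    rw [← Algebra.coe_trace_int, map_intCast]

variable (K) in
/-- The nontrivial automorphism of the ring of integers of a quadratic field. -/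
noncomputable def conj : 𝓞 K ≃+* 𝓞 K :=
  (exists_ringEquiv_mul_eq_norm_and_add_eq_trace K).choose

theorem mul_conj (x : 𝓞 K) : x * conj K x = (Algebra.norm ℤ x : ℤ) :=
  ((exists_ringEquiv_mul_eq_norm_and_add_eq_trace K).choose_spec x).1

theorem add_conj (x : 𝓞 K) : x + conj K x = (Algebra.trace ℤ (𝓞 K) x : ℤ) :=
  ((exists_ringEquiv_mul_eq_norm_and_add_eq_trace K).choose_spec x).2

theorem finrank_ringOfIntegers : Module.finrank ℤ (𝓞 K) = 2 := by
  rw [RingOfIntegers.rank, Algebra.IsQuadraticExtension.finrank_eq_two]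

theorem absNorm_span_natCast_eq_sq (m : ℕ) : Ideal.absNorm (Ideal.span {(m : 𝓞 K)}) = m ^ 2 := by
  rw [Ideal.absNorm_span_natCast, finrank_ringOfIntegers]

theorem absNorm_eq_of_sq_eq_span {I : Ideal (𝓞 K)} {m : ℕ}
    (h : I ^ 2 = Ideal.span {(m : 𝓞 K)}) : Ideal.absNorm I = m := by
  apply Nat.pow_left_injective two_ne_zero
  beta_reduce
  rw [← map_pow, h, absNorm_span_natCast_eq_sq]

theorem eq_of_isPrime_of_sq_eq_span {P Q : Ideal (𝓞 K)} {q : ℕ} (hq : q.Prime)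
    (hQ : Q ^ 2 = Ideal.span {(q : 𝓞 K)}) (hP : P.IsPrime) (hqP : (q : 𝓞 K) ∈ P) : P = Q := by
  have hQN := absNorm_eq_of_sq_eq_span hQ
  have hQ_prime : Q.IsPrime := Ideal.isPrime_of_irreducible_absNorm (hQN ▸ hq)
  have hQ₀ : Q ≠ ⊥ := by
    rintro rfl
    exact hq.ne_zero (hQN.symm.trans Ideal.absNorm_bot)
  have hle : Q ≤ P := hP.le_of_pow_le (n := 2) (by rwa [hQ, Ideal.span_singleton_le_iff_mem])
  exact ((hQ_prime.isMaximal hQ₀).eq_of_le hP.ne_top hle).symm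

end Quadratic

section ImaginaryQuadratic

variable {K : Type*} [Field K] [NumberField K] [Algebra.IsQuadraticExtension ℚ K] {n : ℕ}
  {ω : 𝓞 K} (hω : ω ^ 2 = -(n : 𝓞 K))

include hω

theorem conj_eq_neg (hn : n ≠ 0) : conj K ω = -ω := by
  have hsq : conj K ω ^ 2 = ω ^ 2 := by rw [← map_pow, hω, map_neg, map_natCast]
  refine (sq_eq_sq_iff_eq_or_eq_neg.mp hsq).resolve_left fun h ↦ ?_
  have htrace := add_conj ω
  rw [h, ← two_mul] at htrace
  have : (-(4 * n) : ℤ) = Algebra.trace ℤ (𝓞 K) ω ^ 2 := by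
    apply Int.cast_injective (α := 𝓞 K)
    push_cast
    rw [← htrace]
    linear_combination -4 * hω
  have := sq_nonneg (Algebra.trace ℤ (𝓞 K) ω)
  omega

theorem mul_four_mul_norm (hn : n ≠ 0) (x : 𝓞 K) : (n : ℤ) * (4 * Algebra.norm ℤ x) =
    Algebra.trace ℤ (𝓞 K) (x * ω) ^ 2 + n * Algebra.trace ℤ (𝓞 K) x ^ 2 := by
  apply Int.cast_injective (α := 𝓞 K)
  push_cast
  rw [← mul_conj, ← add_conj, ← add_conj, map_mul, conj_eq_neg hω hn]
  linear_combination -(x - conj K x) ^ 2 * hω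

theorem norm_nonneg_of_sq_eq_neg (hn : n ≠ 0) (x : 𝓞 K) : 0 ≤ Algebra.norm ℤ x := by
  have hpos : (0 : ℤ) < n * 4 := by positivity
  refine nonneg_of_mul_nonneg_right ?_ hpos
  rw [mul_assoc, mul_four_mul_norm hω hn]
  positivity

theorem mul_conj_eq_absNorm (hn : n ≠ 0) (x : 𝓞 K) :
    x * conj K x = (Ideal.absNorm (Ideal.span {x}) : 𝓞 K) := by
  rw [mul_conj, Ideal.absNorm_span_singleton, ← Int.cast_natCast,
    Int.natAbs_of_nonneg (norm_nonneg_of_sq_eq_neg hω hn x)]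

theorem addHilbert_absNorm_span_singleton {p : ℕ} [Fact p.Prime] (hpn : p ∣ n) (hnp : ¬p ∣ n / p)
    {x : 𝓞 K} (hx : x ≠ 0) : addHilbert n p (Ideal.absNorm (Ideal.span {x})) = 0 := by
  have hn : n ≠ 0 := by rintro rfl; simp at hnp
  set N := Ideal.absNorm (Ideal.span {x}) with hN
  have hN₀ : N ≠ 0 := by simpa [hN, Ideal.absNorm_eq_zero_iff] using hx
  obtain ⟨a, b, hab⟩ : ∃ a b : ℕ, n * (2 ^ 2 * N) = a ^ 2 + n * b ^ 2 := by
    refine ⟨(Algebra.trace ℤ (𝓞 K) (x * ω)).natAbs, (Algebra.trace ℤ (𝓞 K) x).natAbs, ?_⟩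
    zify
    rw [sq_abs, sq_abs, ← mul_four_mul_norm hω hn, hN, Ideal.absNorm_span_singleton,
      Int.natAbs_of_nonneg (norm_nonneg_of_sq_eq_neg hω hn x)]
    norm_num
  have hn_self : addHilbert n p n = 0 := by simpa using addHilbert_sq_add_mul_sq hpn hnp 0 1
  have h := addHilbert_sq_add_mul_sq hpn hnp a b
  rwa [← hab, addHilbert_mul hn (by positivity), addHilbert_mul (by positivity) hN₀, hn_self,
    addHilbert_sq two_ne_zero, zero_add, zero_add] at h

theorem exists_absNorm_eq {q : ℕ} (hn : n ≠ 0) {s : ℤ}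
    (hs : (q : ℤ) ∣ s ^ 2 + n) (hqs : IsCoprime (q : ℤ) (2 * s)) :
    ∃ I : Ideal (𝓞 K), Ideal.absNorm I = q := by
  obtain ⟨m, hm⟩ := hs
  obtain ⟨u, v, huv⟩ := hqs
  have hm' : (s : 𝓞 K) ^ 2 + n = q * m := by exact_mod_cast congrArg (Int.cast : ℤ → 𝓞 K) hm
  have huv' : (u : 𝓞 K) * q + v * (2 * s) = 1 := by
    exact_mod_cast congrArg (Int.cast : ℤ → 𝓞 K) huv
  have hmul : Ideal.span {(q : 𝓞 K), ω - s} * Ideal.span {(q : 𝓞 K), -ω - s} =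
      Ideal.span {(q : 𝓞 K)} := by
    apply span_pair_mul_span_pair_eq (m := (m : 𝓞 K))
    · linear_combination hm' - hω
    · rw [Ideal.eq_top_iff_one]
      simp only [Ideal.mem_span_insert, Ideal.mem_span_singleton']
      refine ⟨u, _, ⟨-v, _, ⟨-v, _, ⟨0, rfl⟩, rfl⟩, rfl⟩, ?_⟩
      linear_combination -huv'
  have hconj : (Ideal.span {(q : 𝓞 K), ω - s}).map (conj K) = Ideal.span {(q : 𝓞 K), -ω - s} := by
    rw [Ideal.map_span, Set.image_pair, map_natCast, map_sub, map_intCast, conj_eq_neg hω hn]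
  refine ⟨Ideal.span {(q : 𝓞 K), ω - s}, ?_⟩
  apply Nat.pow_left_injective two_ne_zero
  beta_reduce
  rw [← absNorm_span_natCast_eq_sq (K := K) q, ← hmul, ← hconj, map_mul, absNorm_map_ringEquiv,
    ← sq]

end ImaginaryQuadratic

/-! ### Ambiguous ideal classes -/

section SquareRoot

variable {R : Type*} [CommRing R]

theorem sup_sq_eq_of_sq_eq_mul {I J L : Ideal R} (hIJ : I ⊔ J = ⊤) (h : L ^ 2 = I * J) :
    (L ⊔ I) ^ 2 = I := by
  calc (L ⊔ I) ^ 2 = L ^ 2 ⊔ (I * L ⊔ I * I) := by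
        rw [sq, Ideal.sup_mul, Ideal.mul_sup, Ideal.mul_sup, mul_comm L I, sup_assoc,
          sup_left_idem, ← sq L]
    _ = I * (I ⊔ J ⊔ L) := by
      rw [h, Ideal.mul_sup, Ideal.mul_sup]
      ac_rfl
    _ = I := by rw [hIJ, top_sup_eq, Ideal.mul_top]

variable [IsDedekindDomain R]

theorem mk0_mem_of_sq_eq_span_of_squarefree {H : Subgroup (ClassGroup R)}
    (hH : ∀ (q : ℕ) (P : (Ideal R)⁰), q.Prime → (P : Ideal R) ^ 2 = Ideal.span {(q : R)} →
      ClassGroup.mk0 P ∈ H) {m : ℕ} (hm : Squarefree m) {J : (Ideal R)⁰}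
    (hJ : (J : Ideal R) ^ 2 = Ideal.span {(m : R)}) : ClassGroup.mk0 J ∈ H := by
  induction m using induction_on_primes generalizing J with
  | zero => exact absurd hm not_squarefree_zero
  | one =>
    have : J = 1 := Subtype.ext (pow_left_injective two_ne_zero (by simp [hJ, Ideal.top_pow]))
    rw [this, map_one]
    exact H.one_mem
  | prime_mul q m hq ih =>
    obtain ⟨hqm, -, hm⟩ := Nat.squarefree_mul_iff.mp hm
    have hcop : Ideal.span {(q : R)} ⊔ Ideal.span {(m : R)} = ⊤ :=
      ((Ideal.isCoprime_span_singleton_iff _ _).mpr hqm.cast).sup_eq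
    have hmul : (J : Ideal R) ^ 2 = Ideal.span {(q : R)} * Ideal.span {(m : R)} := by
      rw [hJ, Nat.cast_mul, Ideal.span_singleton_mul_span_singleton]
    have hP := sup_sq_eq_of_sq_eq_mul hcop hmul
    have hL := sup_sq_eq_of_sq_eq_mul (sup_comm _ _ |>.trans hcop) (hmul.trans (mul_comm _ _))
    have sup_mem (L : Ideal R) : (J : Ideal R) ⊔ L ∈ (Ideal R)⁰ :=
      mem_nonZeroDivisors_of_ne_zero fun h ↦
        nonZeroDivisors.coe_ne_zero J (le_bot_iff.mp (le_sup_left.trans_eq h))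
    have hfac : J = ⟨_, sup_mem (Ideal.span {(q : R)})⟩ * ⟨_, sup_mem (Ideal.span {(m : R)})⟩ := by
      refine Subtype.ext (pow_left_injective two_ne_zero ?_)
      beta_reduce
      rw [Submonoid.coe_mul, mul_pow, hP, hL, hmul]
    rw [hfac, map_mul]
    exact H.mul_mem (hH q _ hq hP) (ih hm hL)

theorem mk0_mem_of_sq_eq_span [CharZero R] {H : Subgroup (ClassGroup R)}
    (hH : ∀ (q : ℕ) (P : (Ideal R)⁰), q.Prime → (P : Ideal R) ^ 2 = Ideal.span {(q : R)} →
      ClassGroup.mk0 P ∈ H) {m : ℕ} (hm : m ≠ 0) {J : (Ideal R)⁰}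
    (hJ : (J : Ideal R) ^ 2 = Ideal.span {(m : R)}) : ClassGroup.mk0 J ∈ H := by
  obtain ⟨v, u, rfl, hv⟩ := Nat.sq_mul_squarefree m
  have hu : (u : R) ≠ 0 := by
    rw [Nat.cast_ne_zero]
    rintro rfl
    simp at hm
  have hsplit : (J : Ideal R) ^ 2 = Ideal.span {(u : R)} ^ 2 * Ideal.span {(v : R)} := by
    rw [hJ, Ideal.span_singleton_pow, Ideal.span_singleton_mul_span_singleton]
    push_cast
    rfl
  obtain ⟨L, hL⟩ : Ideal.span {(u : R)} ∣ J :=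
    (UniqueFactorizationMonoid.pow_dvd_pow_iff_dvd two_ne_zero).mp ⟨_, hsplit⟩
  have hu' : Ideal.span {(u : R)} ≠ 0 := by simpa using hu
  have hLv : L ^ 2 = Ideal.span {(v : R)} := by
    rw [hL, mul_pow] at hsplit
    exact mul_left_cancel₀ (pow_ne_zero 2 hu') hsplit
  have hL₀ : L ∈ (Ideal R)⁰ := mem_nonZeroDivisors_of_ne_zero fun h ↦
    nonZeroDivisors.coe_ne_zero J (by rw [hL, h, mul_zero])
  have hcls : ClassGroup.mk0 J = ClassGroup.mk0 ⟨L, hL₀⟩ :=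
    ClassGroup.mk0_eq_mk0_iff.mpr ⟨1, u, one_ne_zero, hu, by simp [hL]⟩
  rw [hcls]
  exact mk0_mem_of_sq_eq_span_of_squarefree hH hv hLv

end SquareRoot

section Ambiguous

variable {K : Type*} [Field K] [NumberField K] [Algebra.IsQuadraticExtension ℚ K] {n : ℕ}
  {ω : 𝓞 K} (hω : ω ^ 2 = -(n : 𝓞 K)) (hn : n ≠ 0)

include hω hn

-- Hilbert 90 for `y / m`, an element of norm `1`.
theorem exists_mul_conj_eq_natCast_mul {y : 𝓞 K} {m : ℕ} (h : y * conj K y = m ^ 2) :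
    ∃ x : 𝓞 K, x ≠ 0 ∧ y * conj K x = m * x := by
  by_cases hy : m + y = 0
  · refine ⟨ω, ?_, ?_⟩
    · rintro rfl
      simp [eq_comm, hn] at hω
    · rw [conj_eq_neg hω hn]
      linear_combination -ω * hy
  · exact ⟨m + y, hy, by rw [map_add, map_natCast]; linear_combination h⟩

theorem exists_mk0_eq_of_sq_eq_one {c : ClassGroup (𝓞 K)} (hc : c ^ 2 = 1) :
    ∃ J : (Ideal (𝓞 K))⁰, ClassGroup.mk0 J = c ∧
      ∃ m : ℕ, m ≠ 0 ∧ (J : Ideal (𝓞 K)) ^ 2 = Ideal.span {(m : 𝓞 K)} := by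
  obtain ⟨I, rfl⟩ := ClassGroup.mk0_surjective c
  have hI := nonZeroDivisors.coe_ne_zero I
  rw [← map_pow, ClassGroup.mk0_eq_one_iff] at hc
  obtain ⟨γ, hγ⟩ := hc
  rw [Ideal.submodule_span_eq, SubmonoidClass.coe_pow] at hγ
  set N := Ideal.absNorm (I : Ideal (𝓞 K)) with hN
  have hγ_norm : γ * conj K γ = (N : 𝓞 K) ^ 2 := by
    rw [mul_conj_eq_absNorm hω hn, ← hγ, map_pow, Nat.cast_pow]
  obtain ⟨β, hβ, hβγ⟩ := exists_mul_conj_eq_natCast_mul hω hn hγ_norm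
  have hβ' : conj K β ≠ 0 := by simpa using hβ
  have hJ : Ideal.span {conj K β} * I ∈ (Ideal (𝓞 K))⁰ :=
    mem_nonZeroDivisors_of_ne_zero (mul_ne_zero (by simpa using hβ') hI)
  refine ⟨⟨_, hJ⟩, ?_, N * Ideal.absNorm (Ideal.span {β}), ?_, ?_⟩
  · exact ClassGroup.mk0_eq_mk0_iff.mpr ⟨1, conj K β, one_ne_zero, hβ', by simp⟩
  · simp only [ne_eq, mul_eq_zero, hN, Ideal.absNorm_eq_zero_iff, Ideal.span_singleton_eq_bot]
    tauto
  · calc (Ideal.span {conj K β} * I : Ideal (𝓞 K)) ^ 2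
        = Ideal.span {conj K β ^ 2 * γ} := by
          rw [mul_pow, hγ, Ideal.span_singleton_pow, Ideal.span_singleton_mul_span_singleton]
      _ = Ideal.span {((N * Ideal.absNorm (Ideal.span {β}) : ℕ) : 𝓞 K)} := by
        congr 2
        rw [Nat.cast_mul, ← mul_conj_eq_absNorm hω hn]
        linear_combination conj K β * hβγ

theorem mem_of_sq_eq_one {H : Subgroup (ClassGroup (𝓞 K))}
    (hH : ∀ (q : ℕ) (P : (Ideal (𝓞 K))⁰), q.Prime →
      (P : Ideal (𝓞 K)) ^ 2 = Ideal.span {(q : 𝓞 K)} → ClassGroup.mk0 P ∈ H)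
    {c : ClassGroup (𝓞 K)} (hc : c ^ 2 = 1) : c ∈ H := by
  obtain ⟨J, rfl, m, hm, hJ⟩ := exists_mk0_eq_of_sq_eq_one hω hn hc
  exact mk0_mem_of_sq_eq_span hH hm hJ

theorem dvd_four_mul_of_sq_eq_span {q : ℕ} (hq : q.Prime) {P : Ideal (𝓞 K)}
    (hP : P ^ 2 = Ideal.span {(q : 𝓞 K)}) : q ∣ 4 * n := by
  have hN := absNorm_eq_of_sq_eq_span hP
  have : Fact q.Prime := ⟨hq⟩
  have hcard : Nat.card (𝓞 K ⧸ P) = q := by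
    rw [← hN, Ideal.absNorm_apply, Submodule.cardQuot_apply]
  have hP_top : P ≠ ⊤ := by
    rintro rfl
    exact hq.ne_one (hN.symm.trans Ideal.absNorm_top)
  have : Nontrivial (𝓞 K ⧸ P) := Ideal.Quotient.nontrivial_iff.mpr hP_top
  obtain ⟨s, hs⟩ := AddSubgroup.mem_zmultiples_iff.mp
    (mem_zmultiples_of_prime_card hcard one_ne_zero (g' := Ideal.Quotient.mk P ω))
  have hωs : ω - s ∈ P := by
    rw [← Ideal.Quotient.eq, ← hs]
    simp
  have hP_conj : P.map (conj K) = P := by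
    apply pow_left_injective two_ne_zero
    beta_reduce
    rw [← Ideal.map_pow, hP, Ideal.map_span, Set.image_singleton, map_natCast]
  have hωs' : -ω - s ∈ P := by
    have := Ideal.mem_map_of_mem (conj K) hωs
    rwa [hP_conj, map_sub, conj_eq_neg hω hn, map_intCast] at this
  have hmem : ((4 * n : ℕ) : 𝓞 K) ∈ P := by
    convert P.mul_mem_left (-(2 * ω)) (P.sub_mem hωs hωs') using 1
    push_cast
    linear_combination 4 * hω
  have hdvd := Ideal.absNorm_dvd_absNorm_of_le ((Ideal.span_singleton_le_iff_mem P).mpr hmem)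
  rw [hN, absNorm_span_natCast_eq_sq] at hdvd
  exact hq.dvd_of_dvd_pow hdvd

end Ambiguous

/-! ### Ramified classes and genus characters -/

section

variable {ι : Type*}

/-- The rational primes ramified in `ℚ(√-n)`, for `n = ∏ i, p i ≡ 1 (mod 4)`. -/
def ramifiedNat (p : ι → ℕ) : ι ⊕ Unit → ℕ :=
  Sum.elim p fun _ ↦ 2

/-- The prime ideals of `ℚ(√-n)` above the primes `ramifiedNat p j`, where `ω = √-n`. -/
def ramifiedIdeal {R : Type*} [CommRing R] (p : ι → ℕ) (ω : R) : ι ⊕ Unit → Ideal R :=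
  Sum.elim (fun i ↦ Ideal.span {(p i : R), ω}) fun _ ↦ Ideal.span {((2 : ℕ) : R), 1 + ω}

end

namespace IsRedeiFactorization

section Ideal

variable {ι : Type*} [Fintype ι] {n : ℕ} {p : ι → ℕ} {R : Type*} [CommRing R] {ω : R}

theorem prime_ramifiedNat (h : IsRedeiFactorization n p) (j : ι ⊕ Unit) :
    (ramifiedNat p j).Prime := by
  rcases j with i | _
  exacts [h.prime i, Nat.prime_two]

theorem ramifiedIdeal_sq (h : IsRedeiFactorization n p) (hω : ω ^ 2 = -(n : R)) (j : ι ⊕ Unit) :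
    ramifiedIdeal p ω j ^ 2 = Ideal.span {(ramifiedNat p j : R)} := by
  rcases j with i | _
  · exact span_natCast_pair_sq hω (Nat.mul_div_cancel' (h.dvd i))
      ((h.prime i).coprime_iff_not_dvd.mpr (h.not_dvd_div i))
  · exact span_two_one_add_sq hω (h.mod_four_of_dvd dvd_rfl)

theorem exists_ramifiedNat_eq (h : IsRedeiFactorization n p) {q : ℕ} (hq : q.Prime)
    (hqn : q ∣ 4 * n) : ∃ j, ramifiedNat p j = q := by
  rcases hq.dvd_mul.mp hqn with hq4 | hqn
  · exact ⟨.inr (), ((Nat.prime_dvd_prime_iff_eq hq Nat.prime_two).mp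
      (hq.dvd_of_dvd_pow (n := 2) hq4)).symm⟩
  · obtain ⟨i, rfl⟩ := h.exists_eq_of_prime_dvd hq hqn
    exact ⟨.inl i, rfl⟩

variable [IsDedekindDomain R] [CharZero R]

theorem ramifiedIdeal_mem (h : IsRedeiFactorization n p) (hω : ω ^ 2 = -(n : R)) (j : ι ⊕ Unit) :
    ramifiedIdeal p ω j ∈ (Ideal R)⁰ :=
  mem_nonZeroDivisors_of_sq_eq_span
    (Nat.cast_ne_zero.mpr (h.prime_ramifiedNat j).ne_zero) (h.ramifiedIdeal_sq hω j)

/-- The classes of the ramified prime ideals of `ℚ(√-n)`, in the additive class group. -/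
noncomputable def ramifiedClass (h : IsRedeiFactorization n p) (hω : ω ^ 2 = -(n : R))
    (j : ι ⊕ Unit) : Additive (ClassGroup R) :=
  .ofMul (ClassGroup.mk0 ⟨_, h.ramifiedIdeal_mem hω j⟩)

theorem two_nsmul_ramifiedClass (h : IsRedeiFactorization n p) (hω : ω ^ 2 = -(n : R))
    (j : ι ⊕ Unit) : 2 • h.ramifiedClass hω j = 0 := by
  rw [ramifiedClass, ← ofMul_pow, ← map_pow, ofMul_eq_zero, ClassGroup.mk0_eq_one_iff]
  exact ⟨_, h.ramifiedIdeal_sq hω j⟩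

theorem sum_ramifiedClass_inl (h : IsRedeiFactorization n p) (hω : ω ^ 2 = -(n : R)) :
    ∑ i, h.ramifiedClass hω (.inl i) = 0 := by
  simp only [ramifiedClass]
  rw [← ofMul_prod, ← map_prod, ofMul_eq_zero, ClassGroup.mk0_eq_one_iff]
  refine ⟨ω, pow_left_injective two_ne_zero ?_⟩
  simp only [SubmonoidClass.coe_finsetProd]
  rw [← Finset.prod_pow, Finset.prod_congr rfl fun i _ ↦ h.ramifiedIdeal_sq hω (.inl i),
    Ideal.prod_span_singleton, Ideal.submodule_span_eq, Ideal.span_singleton_pow, hω,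
    Ideal.span_singleton_neg, ← Nat.cast_prod]
  exact congrArg (fun m : ℕ ↦ Ideal.span {(m : R)}) h.prod_eq

theorem ramifiedClass_inr_eq_zero (h : IsRedeiFactorization n p) (hω : ω ^ 2 = -(n : R))
    (hn : n = 1) : h.ramifiedClass hω (.inr ()) = 0 := by
  rw [hn, Nat.cast_one] at hω
  rw [ramifiedClass, ofMul_eq_zero, ClassGroup.mk0_eq_one_iff]
  refine ⟨1 + ω, Ideal.span_pair_eq_span_right_iff_dvd.mpr ⟨1 - ω, ?_⟩⟩
  push_cast
  linear_combination hω

theorem not_injective_torsionSum_ramifiedClass (h : IsRedeiFactorization n p)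
    (hω : ω ^ 2 = -(n : R)) : ¬Function.Injective
      (torsionSum (h.ramifiedClass hω) (h.two_nsmul_ramifiedClass hω)) := by
  classical
  rw [injective_iff_map_eq_zero]
  push Not
  rcases isEmpty_or_nonempty ι with hι | ⟨⟨i⟩⟩
  · refine ⟨Pi.single (.inr ()) 1, ?_, by simp⟩
    rw [torsionSum_single, h.ramifiedClass_inr_eq_zero]
    rw [← h.prod_eq, Fintype.prod_empty]
  · refine ⟨Int.cast ∘ Sum.elim 1 0, ?_, fun h ↦ ?_⟩
    · rw [torsionSum_intCast, Fintype.sum_sum_type]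
      simpa using h.sum_ramifiedClass_inl hω
    · simpa using congrFun h (.inl i)

end Ideal

section QuadraticField

variable {ι : Type*} [Fintype ι] {n : ℕ} {p : ι → ℕ} {K : Type*} [Field K] [NumberField K]
  [Algebra.IsQuadraticExtension ℚ K] {ω : 𝓞 K} (h : IsRedeiFactorization n p)
  (hω : ω ^ 2 = -(n : 𝓞 K))

theorem range_torsionSum_ramifiedClass :
    (torsionSum (h.ramifiedClass hω) (h.two_nsmul_ramifiedClass hω)).range =
      (nsmulAddMonoidHom 2 : Additive (ClassGroup (𝓞 K)) →+ _).ker := by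
  set ψ := torsionSum (h.ramifiedClass hω) (h.two_nsmul_ramifiedClass hω) with hψ
  apply le_antisymm
  · rw [hψ, range_torsionSum, AddSubgroup.closure_le]
    rintro _ ⟨j, rfl⟩
    exact h.two_nsmul_ramifiedClass hω j
  · intro c hc
    suffices hmem : c.toMul ∈ AddSubgroup.toSubgroup' ψ.range from hmem
    refine mem_of_sq_eq_one hω h.ne_zero (fun q P hq hP ↦ ?_) hc
    obtain ⟨j, rfl⟩ := h.exists_ramifiedNat_eq hq (dvd_four_mul_of_sq_eq_span hω h.ne_zero hq hP)
    have hPj : P = ⟨ramifiedIdeal p ω j, h.ramifiedIdeal_mem hω j⟩ :=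
      Subtype.ext (pow_left_injective two_ne_zero (hP.trans (h.ramifiedIdeal_sq hω j).symm))
    rw [hPj]
    classical
    exact ⟨Pi.single j 1, torsionSum_single _ j⟩

include h hω in
theorem card_ker_two_nsmul_le :
    Nat.card (nsmulAddMonoidHom 2 : Additive (ClassGroup (𝓞 K)) →+ _).ker ≤
      Nat.card (ι → ZMod 2) := by
  have hle := two_mul_card_range_le (h.not_injective_torsionSum_ramifiedClass hω)
  have hcard : Nat.card (ι ⊕ Unit → ZMod 2) = 2 * Nat.card (ι → ZMod 2) := by
    rw [Nat.card_congr (Equiv.sumArrowEquivProdArrow ι Unit (ZMod 2)), Nat.card_prod,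
      Nat.card_congr (Equiv.funUnique Unit (ZMod 2)), Nat.card_zmod, mul_comm]
  rw [range_torsionSum_ramifiedClass, hcard] at hle
  exact le_of_mul_le_mul_left hle two_pos

/-- The genus characters of `ℚ(√-n)` at the odd ramified primes: the class of `I` is sent to the
family of additive Hilbert symbols `(N I, -n)_{p i}`. -/
noncomputable def genusHom : Additive (ClassGroup (𝓞 K)) →+ (ι → ZMod 2) :=
  have (i : ι) : Fact (p i).Prime := ⟨h.prime i⟩
  MonoidHom.toAdditiveLeft <| classGroupLift
    { toFun I := .ofAdd fun i ↦ addHilbert n (p i) (Ideal.absNorm (I : Ideal (𝓞 K)))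
      map_one' := by simp [addHilbert_one, ← Pi.zero_def]
      map_mul' I J := by
        rw [← ofAdd_add]
        congr 1
        ext i
        rw [Submonoid.coe_mul, map_mul, Pi.add_apply]
        exact addHilbert_mul (Ideal.absNorm_ne_zero_of_nonZeroDivisors I)
          (Ideal.absNorm_ne_zero_of_nonZeroDivisors J) }
    (by
      rintro ⟨I, hI⟩ ⟨x, rfl⟩
      have hx : x ≠ 0 := by simpa using nonZeroDivisors.ne_zero hI
      refine congrArg Multiplicative.ofAdd (funext fun i ↦ ?_)
      exact addHilbert_absNorm_span_singleton hω (h.dvd i) (h.not_dvd_div i) hx)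

theorem genusHom_mk0 (I : (Ideal (𝓞 K))⁰) (i : ι) :
    h.genusHom hω (.ofMul (ClassGroup.mk0 I)) i =
      addHilbert n (p i) (Ideal.absNorm (I : Ideal (𝓞 K))) :=
  congrFun (congrArg Multiplicative.toAdd (classGroupLift_mk0 _ _ I)) i

theorem genusHom_mk0_of_coprime {I : (Ideal (𝓞 K))⁰}
    (hI : (Ideal.absNorm (I : Ideal (𝓞 K))).Coprime n) (i : ι) :
    h.genusHom hω (.ofMul (ClassGroup.mk0 I)) i =
      aLeg (Ideal.absNorm (I : Ideal (𝓞 K))) (p i) := by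
  rw [genusHom_mk0, addHilbert_of_not_dvd]
  exact fun hdvd ↦ (h.prime i).not_dvd_one (hI ▸ Nat.dvd_gcd hdvd (h.dvd i))

theorem genusHom_surjective : Function.Surjective (h.genusHom hω) := by
  intro v
  obtain ⟨q, hqn, hq, hqv, s, hs⟩ := h.exists_prime_aLeg_eq v (2 * n)
  obtain ⟨I, hI⟩ := exists_absNorm_eq hω h.ne_zero hs
    (isCoprime_two_mul_of_dvd_sq_add hq h.ne_zero hqn hs)
  have hI₀ : I ∈ (Ideal (𝓞 K))⁰ := mem_nonZeroDivisors_of_ne_zero fun hbot ↦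
    hq.ne_zero (by rw [← hI, hbot, Ideal.zero_eq_bot, Ideal.absNorm_bot])
  have hcop : q.Coprime n := hq.coprime_iff_not_dvd.mpr fun hdvd ↦ by
    have := Nat.le_of_dvd (Nat.pos_of_ne_zero h.ne_zero) hdvd
    omega
  refine ⟨.ofMul (ClassGroup.mk0 ⟨I, hI₀⟩), funext fun i ↦ ?_⟩
  rw [genusHom_mk0_of_coprime _ _ (hI ▸ hcop), hI, hqv]

theorem ker_genusHom : (h.genusHom hω).ker =
    (nsmulAddMonoidHom 2 : Additive (ClassGroup (𝓞 K)) →+ _).range :=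
  ker_eq_range_nsmul_of_card_le
    (fun v ↦ funext fun i ↦ (two_nsmul (v i)).trans (CharTwo.add_self_eq_zero (v i)))
    (h.genusHom_surjective hω) (h.card_ker_two_nsmul_le hω)

theorem genusHom_ramifiedClass (j : ι ⊕ Unit) (i : ι) :
    h.genusHom hω (h.ramifiedClass hω j) i = addHilbert n (p i) (ramifiedNat p j) := by
  rw [ramifiedClass, genusHom_mk0, absNorm_eq_of_sq_eq_span (h.ramifiedIdeal_sq hω j)]

end QuadraticField

section Redei

variable {k : ℕ} {n : ℕ} {p : Fin k → ℕ}

theorem aLeg_neg_four_mul_div (h : IsRedeiFactorization n p) (i : Fin k) :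
    aLeg (-4 * n / p i) (p i) = aLeg (n / p i : ℕ) (p i) := by
  have := Fact.mk (h.prime i)
  have hfour : ¬(p i : ℤ) ∣ -4 := by
    rw [Int.dvd_neg, Int.natCast_dvd_ofNat]
    exact fun hdvd ↦ h.ne_two i ((Nat.prime_dvd_prime_iff_eq (h.prime i) Nat.prime_two).mp
      ((h.prime i).dvd_of_dvd_pow (n := 2) hdvd))
  have hfour_sq : aLeg (-4) (p i) = 0 := by
    rw [aLeg_eq_zero_iff]
    have hneg_one : IsSquare (-1 : ZMod (p i)) :=
      ZMod.exists_sq_eq_neg_one_iff.mpr (by rw [h.mod_four i]; decide)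
    have hfour_eq : ((-4 : ℤ) : ZMod (p i)) = -1 * 2 ^ 2 := by
      push_cast
      ring
    exact hfour_eq ▸ hneg_one.mul (IsSquare.sq 2)
  rw [Int.mul_ediv_assoc _ (by exact_mod_cast h.dvd i), ← Int.natCast_div,
    aLeg_mul hfour (by exact_mod_cast h.not_dvd_div i), hfour_sq, zero_add]

theorem redeiOfN_apply (h : IsRedeiFactorization n p) (i : Fin k) (j : Fin k ⊕ Unit) :
    redeiOfN n k p i j = addHilbert n (p i) (ramifiedNat p j) := by
  have := Fact.mk (h.prime i)
  rcases j with j | _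
  · by_cases hij : i = j
    · subst hij
      simpa [redeiOfN, ramifiedNat, addHilbert_self] using h.aLeg_neg_four_mul_div i
    · have : ¬p i ∣ p j := by
        rw [Nat.prime_dvd_prime_iff_eq (h.prime i) (h.prime j)]
        exact h.injective.ne hij
      simp [redeiOfN, ramifiedNat, hij, addHilbert_of_not_dvd this]
  · have : ¬p i ∣ 2 := by
      rw [Nat.prime_dvd_prime_iff_eq (h.prime i) Nat.prime_two]
      exact h.ne_two i
    simp [redeiOfN, ramifiedNat, addHilbert_of_not_dvd this]

theorem genusHom_torsionSum_ramifiedClass {K : Type*} [Field K] [NumberField K]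
    [Algebra.IsQuadraticExtension ℚ K] {ω : 𝓞 K} (h : IsRedeiFactorization n p)
    (hω : ω ^ 2 = -(n : 𝓞 K)) (Y : Fin k ⊕ Unit → ZMod 2) :
    h.genusHom hω (torsionSum (h.ramifiedClass hω) (h.two_nsmul_ramifiedClass hω) Y) =
      (redeiOfN n k p).mulVec Y := by
  rw [map_torsionSum]
  congr 1
  ext i j
  rw [Matrix.of_apply, genusHom_ramifiedClass, h.redeiOfN_apply]

theorem exists_two_nsmul_eq_four_nsmul_iff_exists_redeiOfN_mulVec_eq {K : Type*} [Field K]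
    [NumberField K] [Algebra.IsQuadraticExtension ℚ K] {ω : 𝓞 K} (h : IsRedeiFactorization n p)
    (hω : ω ^ 2 = -(n : 𝓞 K)) (g : Additive (ClassGroup (𝓞 K))) :
    (∃ a, 2 • g = 4 • a) ↔ ∃ Y, (redeiOfN n k p).mulVec Y = h.genusHom hω g := by
  simp only [← h.genusHom_torsionSum_ramifiedClass hω]
  exact exists_nsmul_eq_mul_nsmul_iff (h.ker_genusHom hω) (h.range_torsionSum_ramifiedClass hω) g

end Redei

end IsRedeiFactorization

/-! ### Ideals attached to rational points on the conics -/

section Conic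

theorem two_pow_mul_mul_two_pow_mul_eq {d d₁ d₂ r r₁ r₂ : ℕ} (hr : r = (r₁ + r₂) % 2)
    (hd : d * d₁.gcd d₂ ^ 2 = d₁ * d₂) :
    2 ^ r₁ * d₁ * (2 ^ r₂ * d₂) = 2 ^ r * d * (2 ^ ((r₁ + r₂) / 2) * d₁.gcd d₂) ^ 2 := by
  calc 2 ^ r₁ * d₁ * (2 ^ r₂ * d₂) = 2 ^ (r + 2 * ((r₁ + r₂) / 2)) * (d₁ * d₂) := by
        rw [hr, Nat.mod_add_div]
        ring
    _ = 2 ^ r * d * (2 ^ ((r₁ + r₂) / 2) * d₁.gcd d₂) ^ 2 := by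
      rw [← hd]
      ring

variable {a b c d e : ℕ}

theorem dvd_and_dvd_of_sq_dvd_mul_sq_add_mul_sq {q : ℕ} (hq : q.Prime) (hde : Squarefree (d * e))
    (hqd : q ∣ d) (h : q ^ 2 ∣ d * a ^ 2 + e * b ^ 2) : q ∣ a ∧ q ∣ b := by
  obtain ⟨d, rfl⟩ := hqd
  have hqde : ¬q ∣ d * e := by
    rw [← hq.coprime_iff_not_dvd]
    apply Nat.coprime_of_squarefree_mul
    rwa [← mul_assoc]
  have hqb : q ∣ b := by
    have : q ∣ e * b ^ 2 := (Nat.dvd_add_right ((dvd_mul_right q d).mul_right _)).mp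
      ((dvd_pow_self q two_ne_zero).trans h)
    exact hq.dvd_of_dvd_pow ((hq.dvd_mul.mp this).resolve_left fun he ↦ hqde (he.mul_left d))
  have hqa : q ∣ d * a ^ 2 := by
    rw [Nat.dvd_add_left ((pow_dvd_pow_of_dvd hqb 2).mul_left e), sq, mul_assoc] at h
    exact Nat.dvd_of_mul_dvd_mul_left hq.pos h
  exact ⟨hq.dvd_of_dvd_pow ((hq.dvd_mul.mp hqa).resolve_left fun hd ↦ hqde (hd.mul_right e)), hqb⟩

theorem even_and_even_of_four_dvd_mul_sq_add_mul_sq (hd : d % 4 = 1) (he : e % 4 = 1)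
    (h : 4 ∣ d * a ^ 2 + e * b ^ 2) : Even a ∧ Even b := by
  have key : ∀ x y : ZMod 4, x ^ 2 + y ^ 2 = 0 → 2 * x = 0 ∧ 2 * y = 0 := by decide
  have hd' : (d : ZMod 4) = (1 : ℕ) := (ZMod.natCast_eq_natCast_iff' d 1 4).mpr hd
  have he' : (e : ZMod 4) = (1 : ℕ) := (ZMod.natCast_eq_natCast_iff' e 1 4).mpr he
  rw [← ZMod.natCast_eq_zero_iff] at h
  push_cast [hd', he', one_mul] at h
  obtain ⟨ha, hb⟩ := key a b h
  have even_of_two_mul {x : ℕ} (hx : (2 * x : ZMod 4) = 0) : Even x := by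
    have : 4 ∣ 2 * x := (ZMod.natCast_eq_zero_iff (2 * x) 4).mp (by exact_mod_cast hx)
    exact even_iff_two_dvd.mpr (by omega)
  exact ⟨even_of_two_mul ha, even_of_two_mul hb⟩

theorem coprime_two_mul_of_sq_dvd_mul_sq_add_mul_sq (hde : Squarefree (d * e)) (hd : d % 4 = 1)
    (he : e % 4 = 1) (hab : (a.gcd b).Coprime c) (h : c ^ 2 ∣ d * a ^ 2 + e * b ^ 2) :
    c.Coprime (2 * (d * e)) := by
  refine Nat.coprime_of_dvd fun q hq hqc hq_dvd ↦ ?_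
  have hq_sq : q ^ 2 ∣ d * a ^ 2 + e * b ^ 2 := (pow_dvd_pow_of_dvd hqc 2).trans h
  have hqab : q ∣ a ∧ q ∣ b := by
    rcases hq.dvd_mul.mp hq_dvd with hq2 | hqde
    · obtain rfl := (Nat.prime_dvd_prime_iff_eq hq Nat.prime_two).mp hq2
      simpa only [even_iff_two_dvd] using even_and_even_of_four_dvd_mul_sq_add_mul_sq hd he hq_sq
    · rcases hq.dvd_mul.mp hqde with hqd | hqe
      · exact dvd_and_dvd_of_sq_dvd_mul_sq_add_mul_sq hq hde hqd hq_sq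
      · rw [mul_comm] at hde
        rw [add_comm] at hq_sq
        exact (dvd_and_dvd_of_sq_dvd_mul_sq_add_mul_sq hq hde hqe hq_sq).symm
  exact Nat.not_coprime_of_dvd_of_dvd hq.one_lt (Nat.dvd_gcd hqab.1 hqab.2) hqc hab

end Conic

section IdealSolution

theorem natCast_mul_dvd_add_mul_sq {R : Type*} [CommRing R] {a b c d e t : ℕ} {ω : R}
    (hω : ω ^ 2 = -((d * e : ℕ) : R)) (ht : t ∣ 2) (h : t * c ^ 2 = d * a ^ 2 + e * b ^ 2) :
    ((t * d : ℕ) : R) ∣ (d * a + b * ω) ^ 2 := by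
  obtain ⟨s, hs⟩ := ht
  have hs' : (2 : R) = t * s := by exact_mod_cast congrArg (Nat.cast : ℕ → R) hs
  have h' : (t * c ^ 2 : R) = d * a ^ 2 + e * b ^ 2 := by
    exact_mod_cast congrArg (Nat.cast : ℕ → R) h
  refine ⟨c ^ 2 + s * b * (a * ω - e * b), ?_⟩
  push_cast at hω ⊢
  linear_combination b ^ 2 * hω - d * h' + d * b * (a * ω - e * b) * hs'

variable {K : Type*} [Field K] [NumberField K] [Algebra.IsQuadraticExtension ℚ K]

theorem exists_sq_eq_and_absNorm_eq {B : Ideal (𝓞 K)} {c : ℕ}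
    (hmul : B * B.map (conj K) = Ideal.span {(c : 𝓞 K)} ^ 2) (hsup : B ⊔ B.map (conj K) = ⊤) :
    ∃ C : Ideal (𝓞 K), C ^ 2 = B ∧ Ideal.absNorm C = c := by
  have hC := sup_sq_eq_of_sq_eq_mul hsup hmul.symm
  refine ⟨_, hC, ?_⟩
  have hnorm := congrArg Ideal.absNorm hmul
  rw [map_mul, absNorm_map_ringEquiv, ← sq, map_pow, absNorm_span_natCast_eq_sq] at hnorm
  apply Nat.pow_left_injective two_ne_zero
  beta_reduce
  rw [← map_pow, hC]
  exact Nat.pow_left_injective two_ne_zero hnorm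

variable {a b c d e t : ℕ} {ω : 𝓞 K} (hω : ω ^ 2 = -((d * e : ℕ) : 𝓞 K))
  (hde : d * e ≠ 0)

include hω hde

theorem conj_add_mul : conj K (d * a + b * ω) = d * a - b * ω := by
  rw [map_add, map_mul, map_mul, map_natCast, map_natCast, map_natCast, conj_eq_neg hω hde]
  ring

theorem add_mul_mul_conj (h : t * c ^ 2 = d * a ^ 2 + e * b ^ 2) :
    (d * a + b * ω) * conj K (d * a + b * ω) = (t * d : ℕ) * (c : 𝓞 K) ^ 2 := by
  have h' : (t * c ^ 2 : 𝓞 K) = d * a ^ 2 + e * b ^ 2 := by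
    exact_mod_cast congrArg (Nat.cast : ℕ → 𝓞 K) h
  rw [conj_add_mul hω hde]
  push_cast at hω ⊢
  linear_combination -b ^ 2 * hω - d * h'

theorem sup_map_conj_eq_top {B : Ideal (𝓞 K)} (hB : d * a + b * ω ∈ B)
    (hcB : ((c ^ 2 : ℕ) : 𝓞 K) ∈ B) (hc : c.Coprime (2 * (d * e))) (hab : (a.gcd b).Coprime c) :
    B ⊔ B.map (conj K) = ⊤ := by
  set T := B ⊔ B.map (conj K)
  have hT : d * a + b * ω ∈ T := Ideal.mem_sup_left hB
  have hT' : d * a - b * ω ∈ T := by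
    rw [← conj_add_mul hω hde]
    exact Ideal.mem_sup_right (Ideal.mem_map_of_mem _ hB)
  have ha : ((2 * (d * e) * a : ℕ) : 𝓞 K) ∈ T := by
    convert T.mul_mem_left (e : 𝓞 K) (T.add_mem hT hT') using 1
    push_cast
    ring
  have hb : ((2 * (d * e) * b : ℕ) : 𝓞 K) ∈ T := by
    convert T.mul_mem_left (-ω) (T.sub_mem hT hT') using 1
    push_cast at hω ⊢
    linear_combination 2 * b * hω
  have hcop : (c ^ 2).gcd ((2 * (d * e) * a).gcd (2 * (d * e) * b)) = 1 := by
    rw [Nat.gcd_mul_left]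
    exact (hc.mul_right hab.symm).pow_left 2
  rw [Ideal.eq_top_iff_one, ← Nat.cast_one, ← hcop]
  exact natCast_gcd_mem (Ideal.mem_sup_left hcB) (natCast_gcd_mem ha hb)

theorem exists_absNorm_eq_and_mul_sq_eq_span (ht : t ∣ 2)
    (hc : c.Coprime (2 * (d * e))) (hab : (a.gcd b).Coprime c)
    (h : t * c ^ 2 = d * a ^ 2 + e * b ^ 2) {D : Ideal (𝓞 K)}
    (hD : D ^ 2 = Ideal.span {((t * d : ℕ) : 𝓞 K)}) :
    ∃ C : Ideal (𝓞 K), Ideal.absNorm C = c ∧ D * C ^ 2 = Ideal.span {d * a + b * ω} := by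
  set α : 𝓞 K := d * a + b * ω
  have htd : ((t * d : ℕ) : 𝓞 K) ≠ 0 := by
    rw [Nat.cast_ne_zero]
    exact mul_ne_zero (ne_zero_of_dvd_ne_zero two_ne_zero ht) (left_ne_zero_of_mul hde)
  have hD₀ : D ^ 2 ≠ 0 := by simpa [hD] using htd
  obtain ⟨B, hB⟩ : D ∣ Ideal.span {α} := by
    rw [← UniqueFactorizationMonoid.pow_dvd_pow_iff_dvd two_ne_zero, hD, Ideal.span_singleton_pow,
      Ideal.dvd_iff_le, Ideal.span_singleton_le_span_singleton]
    exact natCast_mul_dvd_add_mul_sq hω ht h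
  have hD_conj : D.map (conj K) = D := by
    apply pow_left_injective two_ne_zero
    beta_reduce
    rw [← Ideal.map_pow, hD, Ideal.map_span, Set.image_singleton, map_natCast]
  have hmul : B * B.map (conj K) = Ideal.span {(c : 𝓞 K)} ^ 2 := by
    apply mul_left_cancel₀ hD₀
    calc D ^ 2 * (B * B.map (conj K)) = Ideal.span {α} * (Ideal.span {α}).map (conj K) := by
          rw [hB, Ideal.map_mul, hD_conj]
          ring
      _ = D ^ 2 * Ideal.span {(c : 𝓞 K)} ^ 2 := by
        rw [Ideal.map_span, Set.image_singleton, Ideal.span_singleton_mul_span_singleton,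
          add_mul_mul_conj hω hde h, hD, Ideal.span_singleton_pow,
          Ideal.span_singleton_mul_span_singleton]
  have hαB : α ∈ B := by
    rw [← Ideal.span_singleton_le_iff_mem, ← Ideal.dvd_iff_le]
    exact Dvd.intro_left D hB.symm
  have hcB : ((c ^ 2 : ℕ) : 𝓞 K) ∈ B := by
    rw [← Ideal.span_singleton_le_iff_mem, ← Ideal.dvd_iff_le, Nat.cast_pow,
      ← Ideal.span_singleton_pow, ← hmul]
    exact dvd_mul_right _ _
  obtain ⟨C, rfl, hC⟩ :=
    exists_sq_eq_and_absNorm_eq hmul (sup_map_conj_eq_top hω hde hαB hcB hc hab)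
  exact ⟨C, hC, hB.symm⟩

end IdealSolution

namespace IsRedeiFactorization

theorem prod_ramifiedIdeal_sq {ι R : Type*} [Fintype ι] [CommRing R] {n : ℕ} {p : ι → ℕ} {ω : R}
    (h : IsRedeiFactorization n p) (hω : ω ^ 2 = -(n : R)) {d : ℕ} (hd : d ∣ n) (r : ℕ) :
    ((∏ i with p i ∣ d, ramifiedIdeal p ω (.inl i)) * ramifiedIdeal p ω (.inr ()) ^ r) ^ 2 =
      Ideal.span {((2 ^ r * d : ℕ) : R)} := by
  rw [mul_pow, ← pow_mul, mul_comm r, pow_mul, ← Finset.prod_pow]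
  simp only [h.ramifiedIdeal_sq hω, ramifiedNat, Sum.elim_inl, Sum.elim_inr,
    Ideal.prod_span_singleton, Ideal.span_singleton_pow, Ideal.span_singleton_mul_span_singleton]
  rw [← Nat.cast_prod, h.prod_filter_dvd hd]
  push_cast
  rw [mul_comm]

variable {ι : Type*} [Fintype ι] {n : ℕ} {p : ι → ℕ}

theorem exists_sq_eq_span {R : Type*} [CommRing R] [IsDomain R] [CharZero R] {ω : R}
    (h : IsRedeiFactorization n p) (hω : ω ^ 2 = -(n : R)) {d : ℕ} (hd : d ∣ n) (r : ℕ) :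
    ∃ D : (Ideal R)⁰, (D : Ideal R) ^ 2 = Ideal.span {((2 ^ r * d : ℕ) : R)} := by
  have hD := h.prod_ramifiedIdeal_sq hω hd r
  have hd₀ : d ≠ 0 := ne_zero_of_dvd_ne_zero h.ne_zero hd
  exact ⟨⟨_, mem_nonZeroDivisors_of_sq_eq_span (Nat.cast_ne_zero.mpr (by positivity)) hD⟩, hD⟩

theorem exists_two_nsmul_eq_and_genusHom_eq {K : Type*} [Field K] [NumberField K]
    [Algebra.IsQuadraticExtension ℚ K] {ω : 𝓞 K} (h : IsRedeiFactorization n p)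
    (hω : ω ^ 2 = -(n : 𝓞 K)) {a b c d t : ℕ} (hd : d ∣ n) (ht : t ∣ 2)
    (hab : (a.gcd b).Coprime c) (heq : t * c ^ 2 = d * a ^ 2 + n / d * b ^ 2)
    {D : (Ideal (𝓞 K))⁰} (hD : (D : Ideal (𝓞 K)) ^ 2 = Ideal.span {((t * d : ℕ) : 𝓞 K)}) :
    ∃ g, 2 • g = Additive.ofMul (ClassGroup.mk0 D) ∧
      h.genusHom hω g = fun i ↦ aLeg c (p i) := by
  obtain ⟨e, rfl⟩ := hd
  have hde := h.ne_zero
  rw [Nat.mul_div_cancel_left _ (Nat.pos_of_ne_zero (left_ne_zero_of_mul hde))] at heq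
  have hc : c.Coprime (2 * (d * e)) := coprime_two_mul_of_sq_dvd_mul_sq_add_mul_sq h.squarefree
    (h.mod_four_of_dvd (dvd_mul_right d e)) (h.mod_four_of_dvd (dvd_mul_left e d)) hab
    (heq ▸ dvd_mul_left _ _)
  obtain ⟨C, hC, hDC⟩ := exists_absNorm_eq_and_mul_sq_eq_span hω hde ht hc hab heq hD
  have hC₀ : C ∈ (Ideal (𝓞 K))⁰ := mem_nonZeroDivisors_of_ne_zero fun hbot ↦ by
    rw [← hC, hbot, Ideal.zero_eq_bot, Ideal.absNorm_bot, Nat.coprime_zero_left] at hc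
    omega
  have hcls : ClassGroup.mk0 D * ClassGroup.mk0 ⟨C, hC₀⟩ ^ 2 = 1 := by
    rw [← map_pow, ← map_mul, ClassGroup.mk0_eq_one_iff]
    exact ⟨_, hDC⟩
  refine ⟨.ofMul (ClassGroup.mk0 ⟨C, hC₀⟩)⁻¹, ?_, funext fun i ↦ ?_⟩
  · rw [← ofMul_pow, inv_pow, ← eq_inv_of_mul_eq_one_left hcls]
  · rw [ofMul_inv, map_neg, Pi.neg_apply, ZMod.neg_eq_self_mod_two,
      genusHom_mk0_of_coprime _ _ (hC ▸ hc.coprime_mul_left_right), hC]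

end IsRedeiFactorization

/-- with `2^r·d = (2^{r₁}d₁) ⊙ (2^{r₂}d₂)` and `𝔡` the product of the ramified
primes over the prime divisors of `d` times the `r`-th power of the ramified prime over `2`,
`[𝔡] ∈ 4A` iff `C₁ + C₂` lies in the column image of the Rédei matrix `R`. -/
theorem stmt_10 (k : ℕ) (p : Fin k → ℕ) (hp : ∀ i, (p i).Prime)
    (hinj : Function.Injective p)
    (n : ℕ) (hn : n = ∏ i, p i) (hp4 : ∀ i, p i % 4 = 1)
    (K : Type) [Field K] [NumberField K] (hdeg : Module.finrank ℚ K = 2)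
    (ω : 𝓞 K) (hω : (ω : K) ^ 2 = -(n : K))
    (d₁ d₂ : ℕ) (hd₁ : d₁ ∣ n) (hd₂ : d₂ ∣ n)
    (r₁ r₂ : ℕ) (hr₁ : r₁ = 0 ∨ r₁ = 1) (hr₂ : r₂ = 0 ∨ r₂ = 1)
    (hnorm₁ : ∃ x : K, x ≠ 0 ∧ Algebra.norm ℚ x = ((2 ^ r₁ * d₁ : ℕ) : ℚ))
    (hnorm₂ : ∃ x : K, x ≠ 0 ∧ Algebra.norm ℚ x = ((2 ^ r₂ * d₂ : ℕ) : ℚ))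
    (d r : ℕ) (hdn : d ∣ n) (hr : r = (r₁ + r₂) % 2)
    (hd : d * Nat.gcd d₁ d₂ ^ 2 = d₁ * d₂)
    (a₁ b₁ c₁ a₂ b₂ c₂ : ℕ)
    (hpos₁ : 0 < a₁ ∧ 0 < b₁ ∧ 0 < c₁) (hpos₂ : 0 < a₂ ∧ 0 < b₂ ∧ 0 < c₂)
    (hprim₁ : Nat.gcd a₁ (Nat.gcd b₁ c₁) = 1) (hprim₂ : Nat.gcd a₂ (Nat.gcd b₂ c₂) = 1)
    (heq₁ : 2 ^ r₁ * c₁ ^ 2 = d₁ * a₁ ^ 2 + (n / d₁) * b₁ ^ 2)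
    (heq₂ : 2 ^ r₂ * c₂ ^ 2 = d₂ * a₂ ^ 2 + (n / d₂) * b₂ ^ 2)
    (P₂ : Ideal (𝓞 K)) (hP₂prime : P₂.IsPrime) (hP₂two : (2 : 𝓞 K) ∈ P₂) (hP₂bot : P₂ ≠ ⊥)
    (𝔡 : Ideal (𝓞 K))
    (h𝔡 : 𝔡 = (∏ i ∈ Finset.univ.filter (fun i => p i ∣ d),
        Ideal.span {((p i : ℕ) : 𝓞 K), ω}) * P₂ ^ r) :
    ∀ hmem : 𝔡 ∈ (Ideal (𝓞 K))⁰,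
      ((∃ cls : ClassGroup (𝓞 K), ClassGroup.mk0 ⟨𝔡, hmem⟩ = cls ^ 4) ↔
        ∃ Y : (Fin k ⊕ Unit) → ZMod 2,
          (redeiOfN n k p).mulVec Y =
            (fun i => aLeg (c₁ : ℤ) (p i)) + (fun i => aLeg (c₂ : ℤ) (p i))) := by
  intro hmem
  have : Algebra.IsQuadraticExtension ℚ K := { finrank_eq_two' := hdeg }
  have h : IsRedeiFactorization n p := ⟨hp, hinj, hn.symm, hp4⟩
  have hω_sq : ω ^ 2 = -(n : 𝓞 K) := FaithfulSMul.algebraMap_injective (𝓞 K) K (by simpa using hω)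
  have hP₂ : P₂ = ramifiedIdeal p ω (.inr ()) := eq_of_isPrime_of_sq_eq_span Nat.prime_two
    (h.ramifiedIdeal_sq hω_sq (.inr ())) hP₂prime hP₂two
  have h𝔡_sq : 𝔡 ^ 2 = Ideal.span {((2 ^ r * d : ℕ) : 𝓞 K)} := by
    rw [h𝔡, hP₂]
    exact h.prod_ramifiedIdeal_sq hω_sq hdn r
  obtain ⟨D₁, hD₁⟩ := h.exists_sq_eq_span hω_sq hd₁ r₁
  obtain ⟨D₂, hD₂⟩ := h.exists_sq_eq_span hω_sq hd₂ r₂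
  obtain ⟨g₁, hg₁, hgenus₁⟩ := h.exists_two_nsmul_eq_and_genusHom_eq hω_sq hd₁
    (pow_dvd_pow 2 (by omega : r₁ ≤ 1)) ((Nat.gcd_assoc a₁ b₁ c₁).trans hprim₁) heq₁ hD₁
  obtain ⟨g₂, hg₂, hgenus₂⟩ := h.exists_two_nsmul_eq_and_genusHom_eq hω_sq hd₂
    (pow_dvd_pow 2 (by omega : r₂ ≤ 1)) ((Nat.gcd_assoc a₂ b₂ c₂).trans hprim₂) heq₂ hD₂
  have hgcd : d₁.gcd d₂ ≠ 0 := Nat.gcd_ne_zero_left (ne_zero_of_dvd_ne_zero h.ne_zero hd₁)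
  have hcls := mk0_mul_mk0_eq_of_sq_eq_span (L := ⟨𝔡, hmem⟩) hD₁ hD₂ h𝔡_sq (by positivity)
    (two_pow_mul_mul_two_pow_mul_eq hr hd)
  rw [← hcls, ← hgenus₁, ← hgenus₂, ← map_add,
    ← h.exists_two_nsmul_eq_four_nsmul_iff_exists_redeiOfN_mulVec_eq, smul_add, hg₁, hg₂]
  rfl
end

section
/- For every prime p with p ≡ 1 (mod 8), there exist positive integers x and y such that p = x² − 32·y². -/
/-!
Let `s ^ 2 = 2` in `ZMod n`. Thue's lemma gives short integers, not both zero, with `x = s * y` in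
`ZMod n`, so `n` divides `x ^ 2 - 2 * y ^ 2`; size considerations force `x ^ 2 - 2 * y ^ 2 = -n`,
and multiplying by the unit `1 + √2` of norm `-1` gives `n = a ^ 2 - 2 * b ^ 2`. If `n ≡ 1 (mod 8)`
then `b` is even, and if `b ≡ 2 (mod 4)` then multiplying `a + b√2` by the unit `3 + 2√2` of norm
`1` makes the coefficient of `√2` divisible by `4`.
-/

-- Thue's lemma: pigeonhole for `(i, j) ↦ i - s * j` on a box with more than `n` points.
theorem exists_abs_le_intCast_eq_mul {n a b : ℕ} [NeZero n] (hab : n < (a + 1) * (b + 1))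
    (s : ZMod n) :
    ∃ x y : ℤ, (x ≠ 0 ∨ y ≠ 0) ∧ |x| ≤ a ∧ |y| ≤ b ∧ (x : ZMod n) = s * y := by
  have hcard : Fintype.card (ZMod n) < Fintype.card (Fin (a + 1) × Fin (b + 1)) := by
    simpa [ZMod.card] using hab
  obtain ⟨⟨u₁, u₂⟩, ⟨v₁, v₂⟩, hne, heq⟩ := Fintype.exists_ne_map_eq_of_card_lt
    (fun t : Fin (a + 1) × Fin (b + 1) ↦ ((t.1 : ℕ) : ZMod n) - s * (t.2 : ℕ)) hcard
  have abs_sub_le (c : ℕ) (i j : Fin (c + 1)) : |(i : ℤ) - j| ≤ c :=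
    abs_sub_le_of_nonneg_of_le (by positivity) (by omega) (by positivity) (by omega)
  refine ⟨(u₁ : ℤ) - v₁, (u₂ : ℤ) - v₂, ?_, abs_sub_le a u₁ v₁, abs_sub_le b u₂ v₂, ?_⟩
  · contrapose! hne
    ext <;> dsimp only <;> omega
  · push_cast
    linear_combination heq

theorem sq_lt_of_abs_le_sqrt {n : ℕ} (hn : ¬IsSquare n) {x : ℤ} (hx : |x| ≤ n.sqrt) :
    x ^ 2 < n := by
  have hsqrt : n.sqrt ^ 2 < n :=
    (Nat.sqrt_le' n).lt_of_ne fun h ↦ hn ⟨n.sqrt, by rw [← sq, h]⟩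
  calc
    x ^ 2 ≤ (n.sqrt : ℤ) ^ 2 := sq_le_sq' (abs_le.mp hx).1 (abs_le.mp hx).2
    _ < n := by exact_mod_cast hsqrt

theorem sq_eq_mul_sq_iff_of_not_isSquare {d : ℤ} (hd : ¬IsSquare d) {x y : ℤ} :
    x ^ 2 = d * y ^ 2 ↔ x = 0 ∧ y = 0 := by
  have h := Zsqrtd.norm_eq_zero (fun m hm ↦ hd ⟨m, hm⟩) ⟨x, y⟩
  rw [Zsqrtd.norm_def, Zsqrtd.ext_iff, sub_eq_zero] at h
  simpa only [sq, mul_assoc, Zsqrtd.re_zero, Zsqrtd.im_zero] using h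

theorem exists_sq_add_mul_eq_mul_sq {n : ℕ} {d : ℤ} (hn : ¬IsSquare n) (hd₀ : 0 < d)
    (hd : ¬IsSquare d) (h : IsSquare (d : ZMod n)) :
    ∃ k x y : ℤ, 0 < k ∧ k < d ∧ x ^ 2 + k * n = d * y ^ 2 := by
  have hn₀ : n ≠ 0 := fun h₀ ↦ hn (h₀ ▸ IsSquare.zero)
  have : NeZero n := ⟨hn₀⟩
  obtain ⟨s, hs⟩ := h
  obtain ⟨x, y, hxy₀, hx, hy, hxy⟩ := exists_abs_le_intCast_eq_mul (Nat.lt_succ_sqrt n) s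
  have hdvd : (n : ℤ) ∣ d * y ^ 2 - x ^ 2 := by
    rw [← ZMod.intCast_zmod_eq_zero_iff_dvd]
    push_cast
    rw [hxy, hs]
    ring
  obtain ⟨k, hk⟩ := hdvd
  have hx_lt : x ^ 2 < n := sq_lt_of_abs_le_sqrt hn hx
  have hy_lt : y ^ 2 < n := sq_lt_of_abs_le_sqrt hn hy
  have hk_ne : k ≠ 0 := by
    rintro rfl
    have := (sq_eq_mul_sq_iff_of_not_isSquare hd).mp (show x ^ 2 = d * y ^ 2 by linarith)
    tauto
  have hk_nonneg : -1 < k := by nlinarith [sq_nonneg y]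
  have hk_lt : k < d := by nlinarith [sq_nonneg x]
  exact ⟨k, x, y, by omega, hk_lt, by linear_combination -hk⟩

theorem exists_eq_sq_sub_two_mul_sq {n : ℕ} (hn : ¬IsSquare n) (h2 : IsSquare (2 : ZMod n)) :
    ∃ a b : ℤ, (n : ℤ) = a ^ 2 - 2 * b ^ 2 := by
  obtain ⟨k, x, y, hk_pos, hk_lt, h⟩ :=
    exists_sq_add_mul_eq_mul_sq hn two_pos Int.prime_two.not_isSquare (by exact_mod_cast h2)
  obtain rfl : k = 1 := by omega
  exact ⟨x + 2 * y, x + y, by linear_combination h⟩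

theorem odd_and_even_of_sq_sub_two_mul_sq_emod_eight_eq_one {a b : ℤ}
    (h : (a ^ 2 - 2 * b ^ 2) % 8 = 1) : Odd a ∧ Even b := by
  have ha : Odd a := by
    have : Odd (a ^ 2 - 2 * b ^ 2) := Int.odd_iff.mpr (by omega)
    simpa [Int.odd_sub, Int.odd_pow] using this
  refine ⟨ha, Int.not_odd_iff_even.mp fun hb ↦ ?_⟩
  have ha8 := Int.eight_dvd_sq_sub_one_of_odd ha
  have hb8 := Int.eight_dvd_sq_sub_one_of_odd hb
  omega

theorem exists_sq_sub_thirtyTwo_mul_sq_eq {a b : ℤ} (h : (a ^ 2 - 2 * b ^ 2) % 8 = 1) :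
    ∃ x y : ℤ, a ^ 2 - 2 * b ^ 2 = x ^ 2 - 32 * y ^ 2 := by
  obtain ⟨⟨a', ha⟩, ⟨b', hb⟩⟩ := odd_and_even_of_sq_sub_two_mul_sq_emod_eight_eq_one h
  by_cases h4 : 4 ∣ b
  · obtain ⟨c, rfl⟩ := h4
    exact ⟨a, c, by ring⟩
  · obtain ⟨c, hc⟩ : 4 ∣ 2 * a + 3 * b := by omega
    exact ⟨3 * a + 4 * b, c, by linear_combination -2 * (2 * a + 3 * b + 4 * c) * hc⟩

theorem exists_pos_eq_sq_sub_mul_sq {n : ℕ} (hn : ¬IsSquare n) {d : ℤ} (hd : 0 ≤ d) {a b : ℤ}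
    (h : (n : ℤ) = a ^ 2 - d * b ^ 2) :
    ∃ x y : ℕ, 0 < x ∧ 0 < y ∧ (n : ℤ) = (x : ℤ) ^ 2 - d * (y : ℤ) ^ 2 := by
  refine ⟨a.natAbs, b.natAbs, Int.natAbs_pos.mpr ?_, Int.natAbs_pos.mpr ?_, ?_⟩
  · rintro rfl
    have hn₀ : n = 0 := by
      have : 0 ≤ d * b ^ 2 := by positivity
      omega
    exact hn (hn₀ ▸ IsSquare.zero)
  · rintro rfl
    exact hn (Int.isSquare_natCast_iff.mp ⟨a, by linear_combination h⟩)
  · simpa only [Int.natAbs_sq] using h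

theorem stmt_13_general (n : ℕ) (hn : ¬IsSquare n) (h2 : IsSquare (2 : ZMod n))
    (h8 : n % 8 = 1) :
    ∃ x y : ℕ, 0 < x ∧ 0 < y ∧ (n : ℤ) = (x : ℤ) ^ 2 - 32 * (y : ℤ) ^ 2 := by
  obtain ⟨a, b, hab⟩ := exists_eq_sq_sub_two_mul_sq hn h2
  obtain ⟨x, y, hxy⟩ := exists_sq_sub_thirtyTwo_mul_sq_eq (a := a) (b := b) (by omega)
  exact exists_pos_eq_sq_sub_mul_sq hn (by norm_num) (hab.trans hxy)

/-- every prime `p ≡ 1 (mod 8)` is of the form `x² − 32y²` with `x, y` positive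
integers. -/
theorem stmt_13 (p : ℕ) (hp : p.Prime) (h8 : p % 8 = 1) :
    ∃ x y : ℕ, 0 < x ∧ 0 < y ∧ (p : ℤ) = (x : ℤ) ^ 2 - 32 * (y : ℤ) ^ 2 := by
  have : Fact p.Prime := ⟨hp⟩
  exact stmt_13_general p hp.prime.not_isSquare
    ((ZMod.exists_sq_eq_two_iff (by omega)).mpr (.inl h8)) h8
end

section
/- Let p be a prime with p ≡ 1 (mod 8) and let x, y be positive integers with p = x² − 32·y². Let A be the ideal class group of ℚ(√−p). Then x ≡ 3 (mod 4) if and only if A[2] ∩ 4A is trivial (that is, h_8(p) = 0). -/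
open NumberField

/-!
Let `m ≡ 1 (mod 4)` be squarefree, so that the ring of integers is `ℤ[w]` with `w² = -m`, and let
`P = (2, 1 + w)` be the ramified prime above `2`. Any solution of `a² + m = 2n²` with `n` odd makes
`J = (n, a + w)` an ideal of norm `n` with `P J² = (a + w)`, so that `[J]² = [P]`. For `m = p` prime
`A[2] = {1, [P]}`, hence `A[2] ∩ 4A` is trivial iff `[J]` is not a square. Genus theory says that an
ideal of odd norm has square class iff its norm is `1` modulo `4`: squares have index `|A[2]| = 2`
in `A`, and some ideal has norm `3` modulo `4`. If `p = x² - 32y²`, then `a = x + 8y` and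
`n = x + 4y` solve the equation, and `n ≡ x (mod 4)`.

To find `A[2]`, let `I² = (α)` with `α` of nonnegative real part and let `N` be the norm of `I`.
Since `α ᾱ = N²`, the element `β = N + α` satisfies `β² = α · 2(N + Re α)`, so `(β) = I J` where
`J² = (r)` with `r` a positive integer. Up to a rational factor `r` is squarefree, and then it
divides `2p`.
-/

/-! ### Arithmetic of the form `a² + m b²` -/

lemma natCast_zmod_four_eq_one {m : ℕ} (hm : m % 4 = 1) : (m : ZMod 4) = 1 := by
  rw [← ZMod.natCast_mod, hm, Nat.cast_one]

lemma even_and_even_of_four_dvd_sq_add_mul_sq {m : ℕ} (hm : m % 4 = 1) {a b : ℤ}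
    (h : 4 ∣ a ^ 2 + m * b ^ 2) : Even a ∧ Even b := by
  have key : ∀ a b : ZMod 4, a ^ 2 + b ^ 2 = 0 → 2 * a = 0 ∧ 2 * b = 0 := by decide
  have hab := (ZMod.intCast_zmod_eq_zero_iff_dvd _ 4).2 h
  push_cast [natCast_zmod_four_eq_one hm] at hab
  rw [one_mul] at hab
  obtain ⟨ha, hb⟩ := key a b hab
  norm_cast at ha hb
  rw [ZMod.intCast_zmod_eq_zero_iff_dvd] at ha hb
  constructor <;> rw [even_iff_two_dvd] <;> omega

lemma emod_four_eq_one_of_mul_sq_eq_sq_add_mul_sq {m n l : ℕ} (hm : m % 4 = 1) (hn : Odd n)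
    (hl : 0 < l) {a b : ℤ} (h : (n : ℤ) * l ^ 2 = a ^ 2 + m * b ^ 2) : n % 4 = 1 := by
  induction l using Nat.strong_induction_on generalizing a b with
  | _ l ih =>
    obtain ⟨k, rfl⟩ | hl_odd := l.even_or_odd
    · have hdvd : 4 ∣ a ^ 2 + m * b ^ 2 := ⟨n * k ^ 2, by rw [← h]; push_cast; ring⟩
      obtain ⟨⟨c, rfl⟩, ⟨d, rfl⟩⟩ := even_and_even_of_four_dvd_sq_add_mul_sq hm hdvd
      refine ih k (by omega) (by omega) (a := c) (b := d) ?_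
      push_cast at h
      linarith
    · have key : ∀ n l a b : ZMod 4,
          2 * n = 2 → 2 * l = 2 → n * l ^ 2 = a ^ 2 + b ^ 2 → n = 1 := by
        decide
      have two_mul_cast {k : ℕ} (hk : Odd k) : (2 * k : ZMod 4) = 2 := by
        obtain ⟨i, rfl⟩ := hk
        push_cast
        linear_combination (i : ZMod 4) * (by decide : (4 : ZMod 4) = 0)
      have hab := congrArg (Int.cast (R := ZMod 4)) h
      push_cast [natCast_zmod_four_eq_one hm] at hab
      rw [one_mul] at hab
      exact (ZMod.natCast_eq_natCast_iff' n 1 4).1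
        (by simpa using key n l a b (two_mul_cast hn) (two_mul_cast hl_odd) hab)

lemma isCoprime_two_mul_of_two_mul_sq_eq {m : ℕ} (hm : Squarefree m) {n a : ℤ} (hn : Odd n)
    (h : a ^ 2 + m = 2 * n ^ 2) : IsCoprime n (2 * a) := by
  refine (Int.isCoprime_two_right.2 hn).mul_right (IsRelPrime.isCoprime fun d hdn hda => ?_)
  have hd : d * d ∣ (m : ℤ) := by
    rw [← sq, show (m : ℤ) = 2 * n ^ 2 - a ^ 2 by linarith]
    exact dvd_sub ((pow_dvd_pow_of_dvd hdn 2).mul_left 2) (pow_dvd_pow_of_dvd hda 2)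
  exact Int.squarefree_natCast.2 hm d hd

lemma exists_prime_emod_four_eq_three_dvd_sq_add {p : ℕ} (hp : p.Prime) (hp4 : p % 4 = 1) :
    ∃ (q : ℕ) (t : ℤ), q.Prime ∧ q % 4 = 3 ∧ (q : ℤ) ∣ t ^ 2 + p := by
  have : Fact p.Prime := ⟨hp⟩
  have hcop : Nat.Coprime 4 p := by
    rw [Nat.coprime_iff_gcd_eq_one, Nat.gcd_rec, hp4, Nat.gcd_one_left]
  obtain ⟨r, hr⟩ := FiniteField.exists_nonsquare (F := ZMod p) (by
    rw [ZMod.ringChar_zmod_n]; rintro rfl; simp at hp4)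
  have hr0 : r ≠ 0 := by rintro rfl; exact hr (.zero)
  have : NeZero (4 * p) := ⟨by simp [hp.ne_zero]⟩
  -- For `q ≡ 3 (mod 4)` a nonresidue modulo `p`, reciprocity makes `-p` a square modulo `q`.
  let e := ZMod.chineseRemainder hcop
  have hunit : IsUnit (e.symm (3, r)) :=
    (Prod.isUnit_iff.2 ⟨(by decide : IsUnit (3 : ZMod 4)), hr0.isUnit⟩).map e.symm
  obtain ⟨q, -, hq, hqe⟩ := Nat.forall_exists_prime_gt_and_eq_mod hunit 0
  obtain ⟨hq4, hqr⟩ : (q : ZMod 4) = 3 ∧ (q : ZMod p) = r := by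
    simpa [e, Prod.ext_iff] using congrArg e hqe
  replace hq4 : q % 4 = 3 := (ZMod.natCast_eq_natCast_iff' q 3 4).1 hq4
  have : Fact q.Prime := ⟨hq⟩
  have hp_nonsquare : legendreSym q p = -1 := by
    rw [legendreSym.eq_neg_one_iff, Int.cast_natCast,
      ← ZMod.exists_sq_eq_prime_iff_of_mod_four_eq_one hp4 (by omega), hqr]
    exact hr
  have hneg_one_nonsquare : legendreSym q (-1) = -1 := by
    rw [legendreSym.eq_neg_one_iff, Int.cast_neg, Int.cast_one, ZMod.exists_sq_eq_neg_one_iff]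
    omega
  have hneg : legendreSym q (-p) = 1 := by
    rw [← neg_one_mul, legendreSym.mul, hp_nonsquare, hneg_one_nonsquare]
    norm_num
  obtain ⟨t, ht⟩ : IsSquare ((-p : ℤ) : ZMod q) :=
    (legendreSym.eq_one_iff q fun h0 => by simp [(legendreSym.eq_zero_iff q _).2 h0] at hneg).1 hneg
  refine ⟨q, t.val, hq, hq4, ?_⟩
  rw [← ZMod.intCast_zmod_eq_zero_iff_dvd]
  push_cast at ht ⊢
  rw [ZMod.natCast_zmod_val]
  linear_combination -ht

lemma exists_eq_intCast_of_squarefree_mul_sq {m : ℕ} (hm : Squarefree m) {t : ℚ} {n : ℤ}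
    (h : m * t ^ 2 = n) : ∃ k : ℤ, t = k := by
  have hden : (m : ℤ) * t.num ^ 2 = n * t.den ^ 2 := by
    have : (m : ℚ) * t.num ^ 2 = n * t.den ^ 2 := by
      rw [← h, ← Rat.mul_den_eq_num]; ring
    exact_mod_cast this
  have hcop : IsCoprime ((t.den : ℤ) ^ 2) (t.num ^ 2) :=
    (Int.isCoprime_iff_nat_coprime.2 (by simpa using t.reduced.symm)).pow
  have hdvd : t.den * t.den ∣ m := by
    rw [← sq]
    exact_mod_cast hcop.dvd_of_dvd_mul_right (Dvd.intro_left _ hden.symm)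
  exact ⟨t.num, (Rat.coe_int_num_of_den_eq_one (Nat.isUnit_iff.1 (hm _ hdvd))).symm⟩

/-! ### Groups with a single element of order two -/

section CommGroup

variable {G : Type*} [CommGroup G]

lemma isSquare_mul_of_not_isSquare [Finite G] {P a b : G} (hP : P ≠ 1)
    (htors : ∀ c : G, c ^ 2 = 1 ↔ c = 1 ∨ c = P) (ha : ¬ IsSquare a) (hb : ¬ IsSquare b) :
    IsSquare (a * b) := by
  have hrange : (powMonoidHom 2 : G →* G).range = Subgroup.square G := by
    ext c
    simp [isSquare_iff_exists_sq, eq_comm]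
  have hker : ((powMonoidHom 2 : G →* G).ker : Set G) = {1, P} := by
    ext c
    simp [MonoidHom.mem_ker, htors]
  have hindex : (Subgroup.square G).index = 2 := by
    rw [← hrange, Subgroup.index_range, ← SetLike.coe_sort_coe, hker, Nat.card_coe_set_eq,
      Set.ncard_pair hP.symm]
  rw [← Subgroup.mem_square] at ha hb ⊢
  exact (Subgroup.mul_mem_iff_of_index_two hindex).2 (by simp only [ha, hb])

lemma forall_sq_eq_one_imp_iff_not_isSquare {P j : G} (hP : P ≠ 1)
    (htors : ∀ c : G, c ^ 2 = 1 ↔ c = 1 ∨ c = P) (hj : j ^ 2 = P) :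
    (∀ c : G, c ^ 2 = 1 → (∃ b, c = b ^ 4) → c = 1) ↔ ¬ IsSquare j := by
  refine ⟨fun h hj_square => ?_, fun hns c hc ⟨b, hb⟩ => ?_⟩
  · obtain ⟨b, rfl⟩ := isSquare_iff_exists_sq j |>.1 hj_square
    exact hP (h P ((htors P).2 (.inr rfl)) ⟨b, by rw [← hj, ← pow_mul]⟩)
  · refine ((htors c).1 hc).resolve_right fun hcP => hns ?_
    have hquot : (j / b ^ 2) ^ 2 = 1 := by
      rw [div_pow, hj, ← pow_mul, ← hb, hcP, div_self']
    obtain h | h := (htors _).1 hquot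
    · exact ⟨b, by rw [← sq, ← div_eq_one, h]⟩
    · refine ⟨b ^ 3, ?_⟩
      rw [div_eq_iff_eq_mul.1 h, ← hcP, hb]
      group

end CommGroup

/-! ### Rings of the form `ℤ[√-m]` -/

section QuadraticAlgebra

open Module

lemma linearIndependent_one_of_sq_eq_neg {A S : Type*} [CommRing A] [LinearOrder A]
    [IsStrictOrderedRing A] [CommRing S] [Algebra A S] [FaithfulSMul A S] {d : A}
    (hd : 0 < d) {w : S} (hw : w ^ 2 = -algebraMap A S d) :
    LinearIndependent A ![1, w] := by
  refine LinearIndependent.pair_iff.2 fun a b hab => ?_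
  rw [Algebra.smul_def, Algebra.smul_def, mul_one] at hab
  have hnorm : a ^ 2 + d * b ^ 2 = 0 := by
    refine FaithfulSMul.algebraMap_injective A S ?_
    simp only [map_add, map_mul, map_pow, map_zero]
    linear_combination (algebraMap A S a - algebraMap A S b * w) * hab
      + (algebraMap A S b) ^ 2 * hw
  have hb : d * b ^ 2 = 0 := by nlinarith [sq_nonneg a, mul_nonneg hd.le (sq_nonneg b)]
  rw [hb, add_zero] at hnorm
  exact ⟨pow_eq_zero_iff two_ne_zero |>.1 hnorm,
    pow_eq_zero_iff two_ne_zero |>.1 ((mul_eq_zero_iff_left hd.ne').1 hb)⟩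

variable {A S : Type*} [CommRing A] [CommRing S] [Algebra A S] (B : Basis (Fin 2) A S) {d : A}

lemma leftMulMatrix_of_sq_eq_neg (hB0 : B 0 = 1) (hB1 : B 1 ^ 2 = -algebraMap A S d) (a b : A) :
    Algebra.leftMulMatrix B (algebraMap A S a + algebraMap A S b * B 1) =
      !![a, -(d * b); b, a] := by
  have hcol0 : (algebraMap A S a + algebraMap A S b * B 1) * B 0 =
      a • B 0 + b • B 1 := by
    simp only [hB0, Algebra.smul_def, mul_one]
  have hcol1 : (algebraMap A S a + algebraMap A S b * B 1) * B 1 =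
      (-(d * b)) • B 0 + a • B 1 := by
    simp only [hB0, Algebra.smul_def, map_neg, map_mul]
    linear_combination algebraMap A S b * hB1
  ext i j
  rw [Algebra.leftMulMatrix_eq_repr_mul]
  fin_cases j
  · fin_cases i <;> simp [hcol0]
  · fin_cases i <;> simp [hcol1]

lemma norm_of_sq_eq_neg (hB0 : B 0 = 1) (hB1 : B 1 ^ 2 = -algebraMap A S d) (a b : A) :
    Algebra.norm A (algebraMap A S a + algebraMap A S b * B 1) = a ^ 2 + d * b ^ 2 := by
  rw [Algebra.norm_eq_matrix_det B, leftMulMatrix_of_sq_eq_neg B hB0 hB1, Matrix.det_fin_two_of]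
  ring

lemma trace_of_sq_eq_neg (hB0 : B 0 = 1) (hB1 : B 1 ^ 2 = -algebraMap A S d) (a b : A) :
    Algebra.trace A S (algebraMap A S a + algebraMap A S b * B 1) = 2 * a := by
  rw [Algebra.trace_eq_matrix_trace B, leftMulMatrix_of_sq_eq_neg B hB0 hB1,
    Matrix.trace_fin_two_of]
  ring

end QuadraticAlgebra

/-- `w` is a square root of `-m` and `R = ℤ[w]`. -/
structure IsSqrtNegGenerator {R : Type*} [CommRing R] (m : ℕ) (w : R) : Prop where
  sq_eq : w ^ 2 = -(m : R)
  exists_eq (z : R) : ∃ a b : ℤ, z = a + b * w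

section QuadraticField

variable {K : Type*} [Field K] [NumberField K] {m : ℕ} {s : K}

lemma exists_eq_add_mul_and_trace_and_norm (hdeg : Module.finrank ℚ K = 2) (hm : 0 < m)
    (hs : s ^ 2 = -(m : K)) (z : K) :
    ∃ a b : ℚ, z = a + b * s ∧ Algebra.trace ℚ K z = 2 * a ∧
      Algebra.norm ℚ z = a ^ 2 + m * b ^ 2 := by
  have hs' : s ^ 2 = -algebraMap ℚ K m := by rw [hs, map_natCast]
  let B := basisOfLinearIndependentOfCardEqFinrank
    (linearIndependent_one_of_sq_eq_neg (Nat.cast_pos.2 hm) hs') (by simp [hdeg])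
  have hB0 : B 0 = 1 := by simp [B]
  have hB1 : B 1 = s := by simp [B]
  have hz : z = algebraMap ℚ K (B.repr z 0) + algebraMap ℚ K (B.repr z 1) * B 1 := by
    simpa [Fin.sum_univ_two, Algebra.smul_def, hB0] using (B.sum_repr z).symm
  rw [← hB1] at hs'
  refine ⟨B.repr z 0, B.repr z 1, ?_, ?_, ?_⟩
  · simpa [hB1] using hz
  · nth_rw 1 [hz]; exact trace_of_sq_eq_neg B hB0 hs' _ _
  · nth_rw 1 [hz]; exact norm_of_sq_eq_neg B hB0 hs' _ _

theorem exists_isSqrtNegGenerator (hdeg : Module.finrank ℚ K = 2) (hm : Squarefree m)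
    (hm4 : m % 4 = 1) (hs : s ^ 2 = -(m : K)) : ∃ w : 𝓞 K, IsSqrtNegGenerator m w := by
  have hs_int : IsIntegral ℤ s :=
    .of_pow two_pos (hs ▸ (isIntegral_natCast (a := m)).neg)
  obtain ⟨w, rfl⟩ : ∃ w : 𝓞 K, algebraMap (𝓞 K) K w = s := ⟨⟨s, hs_int⟩, rfl⟩
  refine ⟨w, RingOfIntegers.ext (by simpa using hs), fun z => ?_⟩
  obtain ⟨u, v, huv, htrace, hnorm⟩ :=
    exists_eq_add_mul_and_trace_and_norm hdeg (Nat.pos_of_ne_zero hm.ne_zero) hs (z : K)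
  rw [← Algebra.coe_trace_int] at htrace
  rw [← Algebra.coe_norm_int] at hnorm
  set T := Algebra.trace ℤ (𝓞 K) z
  set N := Algebra.norm ℤ z
  obtain ⟨B, hB⟩ := exists_eq_intCast_of_squarefree_mul_sq hm (t := 2 * v) (n := 4 * N - T ^ 2)
    (by push_cast; rw [htrace, hnorm]; ring)
  have hdvd : 4 ∣ T ^ 2 + m * B ^ 2 := by
    refine ⟨N, ?_⟩
    have : (T : ℚ) ^ 2 + m * B ^ 2 = 4 * N := by rw [htrace, hnorm, ← hB]; ring
    exact_mod_cast this
  obtain ⟨⟨a, ha⟩, ⟨b, hb⟩⟩ := even_and_even_of_four_dvd_sq_add_mul_sq hm4 hdvd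
  have hu : u = a := by rw [ha] at htrace; push_cast at htrace; linarith
  have hv : v = b := by rw [hb] at hB; push_cast at hB; linarith
  exact ⟨a, b, RingOfIntegers.ext (by simp [huv, hu, hv])⟩

end QuadraticField

/-! ### The ramified prime above `2` -/

section Ideals

variable {R : Type*} [CommRing R] {w : R} {m : ℕ}

/-- The ideal `(2, 1 + w)`. When `R = ℤ[w]` with `w² = -m` and `m ≡ 1 (mod 4)`, this is the
ramified prime above `2`. -/
def primeOverTwo (w : R) : Ideal R := Ideal.span {2, 1 + w}

lemma two_mem_primeOverTwo : 2 ∈ primeOverTwo w := Ideal.subset_span (by simp)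

lemma one_add_mem_primeOverTwo : 1 + w ∈ primeOverTwo w := Ideal.subset_span (by simp)

lemma primeOverTwo_sq (hw : w ^ 2 = -(m : R)) (hm : m % 4 = 1) :
    primeOverTwo w ^ 2 = Ideal.span {2} := by
  obtain ⟨k, rfl⟩ : ∃ k, m = 4 * k + 1 := ⟨m / 4, by omega⟩
  push_cast at hw
  apply le_antisymm
  · rw [sq, primeOverTwo, Ideal.span_pair_mul_span_pair, Ideal.span_le]
    simp only [Set.insert_subset_iff, Set.singleton_subset_iff, SetLike.mem_coe,
      Ideal.mem_span_singleton]
    exact ⟨dvd_mul_right _ _, dvd_mul_right _ _, dvd_mul_left _ _,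
      ⟨w - 2 * k, by linear_combination hw⟩⟩
  · rw [Ideal.span_singleton_le_iff_mem]
    have h22 := Ideal.pow_mem_pow (two_mem_primeOverTwo (w := w)) 2
    have h21 :=
      Ideal.mul_mem_mul (two_mem_primeOverTwo (w := w)) (one_add_mem_primeOverTwo (w := w))
    have h11 := Ideal.pow_mem_pow (one_add_mem_primeOverTwo (w := w)) 2
    rw [← sq] at h21
    convert sub_mem (sub_mem h21 h11) (Ideal.mul_mem_left _ (k : R) h22) using 1
    linear_combination hw

lemma span_pair_sq_of_sq_add_eq (hw : w ^ 2 = -(m : R)) {n a : ℤ} (h : a ^ 2 + m = 2 * n ^ 2)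
    (hna : IsCoprime n (2 * a)) :
    Ideal.span {(n : R), a + w} ^ 2 = Ideal.span {(n : R) ^ 2, a + w} := by
  have hR : (a ^ 2 + m : R) = 2 * n ^ 2 := by exact_mod_cast congrArg (Int.cast (R := R)) h
  have hsq : (a + w) ^ 2 = 2 * a * (a + w) - 2 * n ^ 2 := by linear_combination hw - hR
  rw [sq, Ideal.span_pair_mul_span_pair]
  apply le_antisymm
  · rw [Ideal.span_le]
    simp only [Set.insert_subset_iff, Set.singleton_subset_iff, SetLike.mem_coe,
      Ideal.mem_span_pair]
    exact ⟨⟨1, 0, by ring⟩, ⟨0, n, by ring⟩, ⟨0, n, by ring⟩,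
      ⟨-2, 2 * a, by linear_combination -hsq⟩⟩
  · obtain ⟨e, f, hef⟩ := hna
    have hefR : (e * n + f * (2 * a) : R) = 1 := by
      exact_mod_cast congrArg (Int.cast (R := R)) hef
    simp only [Ideal.span_le, Set.insert_subset_iff, Set.singleton_subset_iff, SetLike.mem_coe,
      Ideal.mem_span_insert', Ideal.mem_span_singleton']
    refine ⟨⟨-1, 0, 0, 0, by ring⟩, -2 * f, -e, 0, f, ?_⟩
    linear_combination f * hsq + (a + w) * hefR

lemma primeOverTwo_mul_span_pair (hw : w ^ 2 = -(m : R)) {n a : ℤ} (h : a ^ 2 + m = 2 * n ^ 2)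
    (hn : Odd n) (ha : Odd a) :
    primeOverTwo w * Ideal.span {(n : R) ^ 2, a + w} = Ideal.span {(a : R) + w} := by
  have hR : (a ^ 2 + m : R) = 2 * n ^ 2 := by exact_mod_cast congrArg (Int.cast (R := R)) h
  obtain ⟨i, hi⟩ := hn.pow (n := 2)
  obtain ⟨j, rfl⟩ := ha
  have hiR : (n ^ 2 : R) = 2 * i + 1 := by exact_mod_cast congrArg (Int.cast (R := R)) hi
  push_cast at hR ⊢
  rw [primeOverTwo, Ideal.span_pair_mul_span_pair]
  apply le_antisymm
  · rw [Ideal.span_le]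
    simp only [Set.insert_subset_iff, Set.singleton_subset_iff, SetLike.mem_coe,
      Ideal.mem_span_singleton]
    exact ⟨⟨2 * j + 1 - w, by linear_combination hw - hR⟩, dvd_mul_left _ _,
      ⟨n ^ 2 - j * (2 * j + 1) + j * w, by linear_combination j * hR - j * hw⟩,
      dvd_mul_left _ _⟩
  · simp only [Ideal.span_le, Set.singleton_subset_iff, SetLike.mem_coe, Ideal.mem_span_insert',
      Ideal.mem_span_singleton']
    refine ⟨-j, i, -1, 0, ?_⟩
    linear_combination (2 * j + 1 + w) * hiR

lemma primeOverTwo_mul_span_pair_sq (hw : w ^ 2 = -(m : R)) (hm : Squarefree m)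
    (hm4 : m % 4 = 1) {n a : ℤ} (hn : Odd n) (h : a ^ 2 + m = 2 * n ^ 2) :
    primeOverTwo w * Ideal.span {(n : R), a + w} ^ 2 = Ideal.span {(a : R) + w} := by
  have ha : Odd a := (Int.odd_pow' two_ne_zero).1 (by rw [Int.odd_iff]; omega)
  rw [span_pair_sq_of_sq_add_eq hw h (isCoprime_two_mul_of_two_mul_sq_eq hm hn h),
    primeOverTwo_mul_span_pair hw h hn ha]

end Ideals

section ClassGroup

open scoped nonZeroDivisors

variable {R : Type*} [CommRing R] [IsDedekindDomain R]

lemma mk0_mul_mk0_eq_one_of_mul_eq_span {I J : (Ideal R)⁰} {g : R}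
    (h : (I : Ideal R) * J = Ideal.span {g}) : ClassGroup.mk0 I * ClassGroup.mk0 J = 1 := by
  rw [← map_mul]
  exact (ClassGroup.mk0_eq_one_iff _).2 ⟨g, h⟩

variable [CharZero R] {w : R} {m : ℕ}

lemma primeOverTwo_mem_nonZeroDivisors (w : R) : primeOverTwo w ∈ (Ideal R)⁰ :=
  mem_nonZeroDivisors_of_ne_zero fun h =>
    two_ne_zero (Ideal.mem_bot.1 (h ▸ two_mem_primeOverTwo : (2 : R) ∈ (0 : Ideal R)))

/-- The ideal class of `primeOverTwo w`. -/
noncomputable def primeOverTwoClass (w : R) : ClassGroup R :=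
  ClassGroup.mk0 ⟨primeOverTwo w, primeOverTwo_mem_nonZeroDivisors w⟩

lemma primeOverTwoClass_sq (hw : w ^ 2 = -(m : R)) (hm : m % 4 = 1) :
    primeOverTwoClass w ^ 2 = 1 := by
  rw [sq]
  exact mk0_mul_mk0_eq_one_of_mul_eq_span ((sq _).symm.trans (primeOverTwo_sq hw hm))

end ClassGroup

namespace IsSqrtNegGenerator

section CommRing

variable {R : Type*} [CommRing R] {m : ℕ} {w : R}

lemma top_le_span (h : IsSqrtNegGenerator m w) :
    ⊤ ≤ Submodule.span ℤ (Set.range ![1, w]) := by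
  intro z _
  obtain ⟨a, b, rfl⟩ := h.exists_eq z
  simp only [Matrix.range_cons, Matrix.range_empty, Set.union_empty, Set.singleton_union,
    Submodule.mem_span_pair]
  exact ⟨a, b, by simp⟩

lemma span_sq (h : IsSqrtNegGenerator m w) : Ideal.span {w} ^ 2 = Ideal.span {(m : R)} := by
  rw [Ideal.span_singleton_pow, h.sq_eq, Ideal.span_singleton_neg]

variable [CharZero R]

lemma linearIndependent (h : IsSqrtNegGenerator m w) (hm : 0 < m) :
    LinearIndependent ℤ ![1, w] :=
  linearIndependent_one_of_sq_eq_neg (d := (m : ℤ)) (by exact_mod_cast hm)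
    (by simpa using h.sq_eq)

/-- The integral basis `1, w`. -/
noncomputable def basis (h : IsSqrtNegGenerator m w) (hm : 0 < m) : Module.Basis (Fin 2) ℤ R :=
  .mk (h.linearIndependent hm) h.top_le_span

lemma norm_add_mul (h : IsSqrtNegGenerator m w) (hm : 0 < m) (a b : ℤ) :
    Algebra.norm ℤ (a + b * w) = a ^ 2 + m * b ^ 2 := by
  have hB0 : h.basis hm 0 = 1 := by simp [basis]
  have hB1 : h.basis hm 1 = w := by simp [basis]
  simpa [hB1] using
    norm_of_sq_eq_neg (h.basis hm) hB0 (d := (m : ℤ)) (by simp [hB1, h.sq_eq]) a b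

lemma intCast_dvd_iff (h : IsSqrtNegGenerator m w) (hm : 0 < m) {n a b : ℤ} :
    (n : R) ∣ a + b * w ↔ n ∣ a ∧ n ∣ b := by
  refine ⟨fun ⟨z, hz⟩ => ?_, fun ⟨ha, hb⟩ =>
    dvd_add (Int.cast_dvd_cast _ _ ha) ((Int.cast_dvd_cast _ _ hb).mul_right w)⟩
  obtain ⟨c, d, rfl⟩ := h.exists_eq z
  obtain ⟨ha, hb⟩ := LinearIndependent.pair_iff.1 (h.linearIndependent hm)
    (a - n * c) (b - n * d) (by simp only [zsmul_eq_mul]; push_cast; linear_combination hz)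
  exact ⟨⟨c, sub_eq_zero.1 ha⟩, ⟨d, sub_eq_zero.1 hb⟩⟩

lemma intCast_dvd_intCast_iff (h : IsSqrtNegGenerator m w) (hm : 0 < m) {n a : ℤ} :
    (n : R) ∣ a ↔ n ∣ a := by
  simpa using h.intCast_dvd_iff hm (n := n) (a := a) (b := 0)

lemma two_mul_mul_mem_sq (h : IsSqrtNegGenerator m w) (hm : 0 < m) {s : ℕ} (hs : Squarefree s)
    {J : Ideal R} (hJ : J ^ 2 = Ideal.span {(s : R)}) {z : R} (hz : z ∈ J) :
    (2 * m : R) * z ∈ J ^ 2 := by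
  obtain ⟨a, b, rfl⟩ := h.exists_eq z
  have hsq := Ideal.pow_mem_pow hz 2
  rw [hJ, Ideal.mem_span_singleton] at hsq ⊢
  obtain ⟨hre, him⟩ : (s : ℤ) ∣ a ^ 2 - m * b ^ 2 ∧ (s : ℤ) ∣ 2 * a * b := by
    refine (h.intCast_dvd_iff hm).1 ?_
    convert hsq using 1
    · simp
    · push_cast; linear_combination -b ^ 2 * h.sq_eq
  have hs' : Squarefree (s : ℤ) := Int.squarefree_natCast.2 hs
  have ha : (s : ℤ) ∣ 2 * a := by
    refine (hs'.dvd_pow_iff_dvd three_ne_zero).1 ?_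
    convert dvd_add (hre.mul_left (8 * a)) (him.mul_left (4 * m * b)) using 1
    ring
  have hb : (s : ℤ) ∣ 2 * m * b := by
    refine (hs'.dvd_pow_iff_dvd three_ne_zero).1 ?_
    convert dvd_sub (him.mul_left (4 * m ^ 2 * a)) (hre.mul_left (8 * m ^ 2 * b)) using 1
    ring
  convert (h.intCast_dvd_iff hm).2 ⟨ha.mul_left m, hb⟩ using 1
  · simp
  · push_cast; ring

end CommRing

/-! ### Ideals whose square is generated by a positive integer -/

section IsDedekindDomain

variable {R : Type*} [CommRing R] [IsDedekindDomain R] [CharZero R] {m p : ℕ} {w : R}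

lemma dvd_two_mul_of_sq_eq_span (h : IsSqrtNegGenerator m w) (hm : 0 < m) {s : ℕ}
    (hs : Squarefree s) {J : Ideal R} (hJ : J ^ 2 = Ideal.span {(s : R)}) : s ∣ 2 * m := by
  have hJ0 : J ≠ 0 := by
    rintro rfl
    rw [zero_pow two_ne_zero, eq_comm, Ideal.zero_eq_bot, Ideal.span_singleton_eq_bot] at hJ
    exact hs.ne_zero (by exact_mod_cast hJ)
  have hdvd : J ∣ Ideal.span {(2 * m : R)} := by
    rw [← mul_dvd_mul_iff_right hJ0, ← sq, Ideal.dvd_iff_le, Ideal.span_singleton_mul_le_iff]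
    exact fun z => h.two_mul_mul_mem_sq hm hs hJ
  have hsq := pow_dvd_pow_of_dvd hdvd 2
  rw [hJ, Ideal.span_singleton_pow, Ideal.dvd_span_singleton, Ideal.mem_span_singleton] at hsq
  have : (s : ℤ) ∣ (2 * m) ^ 2 := (h.intCast_dvd_intCast_iff hm).1 (by exact_mod_cast hsq)
  exact (hs.dvd_pow_iff_dvd two_ne_zero).1 (by exact_mod_cast this)

lemma exists_eq_span_or_eq_span_mul_of_squarefree (h : IsSqrtNegGenerator p w) (hp : p.Prime)
    (hp4 : p % 4 = 1) {s : ℕ} (hs : Squarefree s) {J : Ideal R}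
    (hJ : J ^ 2 = Ideal.span {(s : R)}) :
    ∃ g : R, g ≠ 0 ∧ (J = Ideal.span {g} ∨ J = Ideal.span {g} * primeOverTwo w) := by
  have eq_of_sq {I : Ideal R} (hI : I ^ 2 = Ideal.span {(s : R)}) : J = I :=
    dvd_antisymm (UniqueFactorizationMonoid.pow_dvd_pow_iff_dvd two_ne_zero |>.1 (hI ▸ hJ.dvd))
      (UniqueFactorizationMonoid.pow_dvd_pow_iff_dvd two_ne_zero |>.1 (hJ ▸ hI.dvd))
  have hP := primeOverTwo_sq h.sq_eq hp4
  have hw0 : w ≠ 0 := by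
    rintro rfl
    simpa [hp.ne_zero, eq_comm] using h.sq_eq
  obtain ⟨k, l, hk, hl, rfl⟩ := Nat.dvd_mul.1 (h.dvd_two_mul_of_sq_eq_span hp.pos hs hJ)
  obtain rfl | rfl := (Nat.dvd_prime Nat.prime_two).1 hk <;>
    obtain rfl | rfl := (Nat.dvd_prime hp).1 hl
  · exact ⟨1, one_ne_zero, .inl (eq_of_sq (by simp))⟩
  · exact ⟨w, hw0, .inl (eq_of_sq (by simp [h.span_sq]))⟩
  · exact ⟨1, one_ne_zero, .inr (eq_of_sq (by simp [hP]))⟩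
  · refine ⟨w, hw0, .inr (eq_of_sq ?_)⟩
    rw [mul_pow, h.span_sq, hP, Ideal.span_singleton_mul_span_singleton]
    push_cast
    rw [mul_comm]

lemma exists_eq_span_or_eq_span_mul (h : IsSqrtNegGenerator p w) (hp : p.Prime)
    (hp4 : p % 4 = 1) {r : ℕ} (hr : 0 < r) {J : Ideal R} (hJ : J ^ 2 = Ideal.span {(r : R)}) :
    ∃ g : R, g ≠ 0 ∧ (J = Ideal.span {g} ∨ J = Ideal.span {g} * primeOverTwo w) := by
  obtain ⟨s, t, -, ht, rfl, hs⟩ := Nat.sq_mul_squarefree_of_pos hr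
  have ht0 : (t : R) ≠ 0 := by exact_mod_cast ht.ne'
  have hJ' : J ^ 2 = Ideal.span {(t : R)} ^ 2 * Ideal.span {(s : R)} := by
    rw [hJ, Ideal.span_singleton_pow, Ideal.span_singleton_mul_span_singleton]
    push_cast
    rfl
  obtain ⟨I, rfl⟩ : Ideal.span {(t : R)} ∣ J :=
    (UniqueFactorizationMonoid.pow_dvd_pow_iff_dvd two_ne_zero).1 ⟨_, hJ'⟩
  rw [mul_pow] at hJ'
  have hI := mul_left_cancel₀ (pow_ne_zero 2 (by simpa using ht0)) hJ'
  obtain ⟨g, hg, rfl | rfl⟩ := h.exists_eq_span_or_eq_span_mul_of_squarefree hp hp4 hs hI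
  · exact ⟨t * g, mul_ne_zero ht0 hg, .inl (Ideal.span_singleton_mul_span_singleton _ _)⟩
  · exact ⟨t * g, mul_ne_zero ht0 hg,
      .inr (by rw [← mul_assoc, Ideal.span_singleton_mul_span_singleton])⟩

lemma exists_mul_eq_span_and_sq_eq_span (h : IsSqrtNegGenerator m w) {I : Ideal R} (hI0 : I ≠ 0)
    {N u v : ℤ} (hNu : 0 < N + u) (hN : N ^ 2 = u ^ 2 + m * v ^ 2)
    (hI : I ^ 2 = Ideal.span {(u : R) + v * w}) :
    ∃ (J : Ideal R) (r : ℕ), 0 < r ∧ I * J = Ideal.span {(N : R) + (u + v * w)} ∧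
      J ^ 2 = Ideal.span {(r : R)} := by
  obtain ⟨r, hr⟩ := Int.eq_ofNat_of_zero_le hNu.le
  have hrR : (N + u : R) = r := by exact_mod_cast congrArg (Int.cast (R := R)) hr
  have hNR : (N : R) ^ 2 = u ^ 2 + m * v ^ 2 := by
    exact_mod_cast congrArg (Int.cast (R := R)) hN
  -- Hilbert 90: `β = N + α` satisfies `β / β̄ = α / N` because `α ᾱ = N²`.
  have hilbert90 : ((N : R) + (u + v * w)) ^ 2 = (u + v * w) * (2 * r : ℕ) := by
    push_cast
    rw [← hrR]
    linear_combination hNR + v ^ 2 * h.sq_eq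
  have hsq : Ideal.span {(N : R) + (u + v * w)} ^ 2 = I ^ 2 * Ideal.span {((2 * r : ℕ) : R)} := by
    rw [hI, Ideal.span_singleton_pow, hilbert90, Ideal.span_singleton_mul_span_singleton]
  obtain ⟨J, hJ⟩ : I ∣ Ideal.span {(N : R) + (u + v * w)} :=
    (UniqueFactorizationMonoid.pow_dvd_pow_iff_dvd two_ne_zero).1 ⟨_, hsq⟩
  rw [hJ, mul_pow] at hsq
  exact ⟨J, 2 * r, by omega, hJ.symm, mul_left_cancel₀ (pow_ne_zero 2 hI0) hsq⟩

end IsDedekindDomain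

section NumberField

open scoped nonZeroDivisors

variable {K : Type*} [Field K] [NumberField K] {m p : ℕ} {w : 𝓞 K}

lemma absNorm_span_add_mul (h : IsSqrtNegGenerator m w) (hm : 0 < m) (a b : ℤ) :
    (Ideal.absNorm (Ideal.span {(a + b * w : 𝓞 K)}) : ℤ) = a ^ 2 + m * b ^ 2 := by
  rw [Ideal.absNorm_span_singleton, h.norm_add_mul hm, Int.natCast_natAbs,
    abs_of_nonneg (by positivity)]

lemma absNorm_span_intCast (h : IsSqrtNegGenerator m w) (hm : 0 < m) (a : ℤ) :
    (Ideal.absNorm (Ideal.span {(a : 𝓞 K)}) : ℤ) = a ^ 2 := by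
  simpa using h.absNorm_span_add_mul hm a 0

lemma absNorm_primeOverTwo (h : IsSqrtNegGenerator m w) (hm : m % 4 = 1) :
    Ideal.absNorm (primeOverTwo w) = 2 := by
  have hsq := h.absNorm_span_intCast (by omega) 2
  rw [Int.cast_ofNat, ← primeOverTwo_sq h.sq_eq hm, map_pow] at hsq
  exact Nat.pow_left_injective two_ne_zero (by exact_mod_cast hsq)

lemma not_isPrincipal_primeOverTwo (h : IsSqrtNegGenerator m w) (hm : m % 4 = 1) (hm1 : m ≠ 1) :
    ¬ (primeOverTwo w).IsPrincipal := by
  rintro ⟨g, hg⟩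
  obtain ⟨a, b, rfl⟩ := h.exists_eq g
  have hnorm : (2 : ℤ) = a ^ 2 + m * b ^ 2 := by
    rw [← h.absNorm_span_add_mul (by omega), ← Ideal.submodule_span_eq, ← hg,
      h.absNorm_primeOverTwo hm, Nat.cast_ofNat]
  have hb : b = 0 := by
    by_contra hb
    have : 0 < b ^ 2 := by positivity
    have : (5 : ℤ) ≤ m := by omega
    nlinarith [sq_nonneg a]
  rw [hb, zero_pow two_ne_zero, mul_zero, add_zero] at hnorm
  exact Int.prime_two.irreducible.not_isSquare ⟨a, by rw [hnorm, sq]⟩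

/-! ### The 2-torsion of the class group -/

lemma primeOverTwoClass_ne_one (h : IsSqrtNegGenerator m w) (hm : m % 4 = 1) (hm1 : m ≠ 1) :
    primeOverTwoClass w ≠ 1 := fun h1 =>
  h.not_isPrincipal_primeOverTwo hm hm1 ((ClassGroup.mk0_eq_one_iff _).1 h1)

lemma exists_sq_eq_span_nonneg (h : IsSqrtNegGenerator m w) {I : (Ideal (𝓞 K))⁰}
    (hI : ClassGroup.mk0 I ^ 2 = 1) :
    ∃ u v : ℤ, 0 ≤ u ∧ (I : Ideal (𝓞 K)) ^ 2 = Ideal.span {(u : 𝓞 K) + v * w} := by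
  rw [← map_pow] at hI
  obtain ⟨α, hα⟩ := (ClassGroup.mk0_eq_one_iff _).1 hI
  obtain ⟨u, v, rfl⟩ := h.exists_eq α
  obtain hu | hu := le_total 0 u
  · exact ⟨u, v, hu, hα⟩
  · refine ⟨-u, -v, by omega, hα.trans ?_⟩
    rw [Ideal.submodule_span_eq, ← Ideal.span_singleton_neg]
    push_cast
    ring_nf

lemma exists_mk0_eq_and_sq_eq_span (h : IsSqrtNegGenerator m w) (hm : 0 < m)
    {c : ClassGroup (𝓞 K)} (hc : c ^ 2 = 1) :
    ∃ (J : (Ideal (𝓞 K))⁰) (r : ℕ), 0 < r ∧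
      (J : Ideal (𝓞 K)) ^ 2 = Ideal.span {(r : 𝓞 K)} ∧ ClassGroup.mk0 J = c := by
  obtain ⟨I, hI⟩ := ClassGroup.mk0_surjective c⁻¹
  obtain ⟨u, v, hu, hIsq⟩ := h.exists_sq_eq_span_nonneg (I := I) (by simp [hI, hc])
  have hI0 := nonZeroDivisors.coe_ne_zero I
  have hN0 : 0 < Ideal.absNorm (I : Ideal (𝓞 K)) :=
    Ideal.absNorm_pos_of_nonZeroDivisors I
  have hnorm : (Ideal.absNorm (I : Ideal (𝓞 K)) : ℤ) ^ 2 = u ^ 2 + m * v ^ 2 := by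
    rw [← h.absNorm_span_add_mul hm, ← hIsq, map_pow, Nat.cast_pow]
  obtain ⟨J, r, hr, hIJ, hJ⟩ :=
    h.exists_mul_eq_span_and_sq_eq_span hI0 (by omega) hnorm hIsq
  have hJ0 : J ≠ 0 := by
    rintro rfl
    rw [zero_pow two_ne_zero, eq_comm, Ideal.zero_eq_bot, Ideal.span_singleton_eq_bot] at hJ
    exact hr.ne' (by exact_mod_cast hJ)
  refine ⟨⟨J, mem_nonZeroDivisors_of_ne_zero hJ0⟩, r, hr, hJ, ?_⟩
  have hmul := mk0_mul_mk0_eq_one_of_mul_eq_span (I := I)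
    (J := ⟨J, mem_nonZeroDivisors_of_ne_zero hJ0⟩) hIJ
  rwa [hI, inv_mul_eq_one, eq_comm] at hmul

lemma sq_eq_one_iff (h : IsSqrtNegGenerator p w) (hp : p.Prime) (hp4 : p % 4 = 1)
    {c : ClassGroup (𝓞 K)} : c ^ 2 = 1 ↔ c = 1 ∨ c = primeOverTwoClass w := by
  refine ⟨fun hc => ?_, ?_⟩
  · obtain ⟨J, r, hr, hJ, rfl⟩ := h.exists_mk0_eq_and_sq_eq_span hp.pos hc
    obtain ⟨g, hg, hJg | hJg⟩ := h.exists_eq_span_or_eq_span_mul hp hp4 hr hJ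
    · exact .inl ((ClassGroup.mk0_eq_one_iff _).2 ⟨g, hJg⟩)
    · refine .inr (ClassGroup.mk0_eq_mk0_iff.2 ⟨1, g, one_ne_zero, hg, ?_⟩)
      simpa using hJg
  · rintro (rfl | rfl)
    · exact one_pow 2
    · exact primeOverTwoClass_sq h.sq_eq hp4

/-! ### Genus theory -/

lemma absNorm_emod_four_eq_one_of_isSquare (h : IsSqrtNegGenerator m w) (hm : m % 4 = 1)
    {I : (Ideal (𝓞 K))⁰} (hI : Odd (Ideal.absNorm (I : Ideal (𝓞 K))))
    (hsq : IsSquare (ClassGroup.mk0 I)) : Ideal.absNorm (I : Ideal (𝓞 K)) % 4 = 1 := by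
  obtain ⟨b, hb⟩ := (isSquare_iff_exists_sq _).1 hsq
  obtain ⟨C, hC⟩ := ClassGroup.mk0_surjective b⁻¹
  have hprincipal : ClassGroup.mk0 (I * C ^ 2) = 1 := by
    rw [map_mul, map_pow, hb, hC, inv_pow, mul_inv_cancel]
  obtain ⟨g, hg⟩ := (ClassGroup.mk0_eq_one_iff _).1 hprincipal
  obtain ⟨a, d, rfl⟩ := h.exists_eq g
  refine emod_four_eq_one_of_mul_sq_eq_sq_add_mul_sq hm hI
    (Ideal.absNorm_pos_of_nonZeroDivisors C) (a := a) (b := d) ?_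
  rw [← h.absNorm_span_add_mul (by omega), ← Ideal.submodule_span_eq, ← hg]
  push_cast [map_mul, map_pow]
  rfl

lemma not_isSquare_of_absNorm_emod_four_eq_three (h : IsSqrtNegGenerator m w) (hm : m % 4 = 1)
    {I : (Ideal (𝓞 K))⁰} (hI : Ideal.absNorm (I : Ideal (𝓞 K)) % 4 = 3) :
    ¬ IsSquare (ClassGroup.mk0 I) := fun hsq => by
  have := h.absNorm_emod_four_eq_one_of_isSquare hm (by rw [Nat.odd_iff]; omega) hsq
  omega

lemma absNorm_span_pair_of_dvd_sq_add (h : IsSqrtNegGenerator m w) (hm : 0 < m) {q : ℕ} {t : ℤ}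
    (hq : q.Prime) (ht : (q : ℤ) ∣ t ^ 2 + m) :
    Ideal.absNorm (Ideal.span {(q : 𝓞 K), t + w}) = q := by
  have not_dvd (a : ℤ) : ¬ (q : 𝓞 K) ∣ a + w := fun hdvd =>
    hq.one_lt.ne' <| by
      simpa [Int.natCast_dvd] using
        ((h.intCast_dvd_iff hm (n := q) (a := a) (b := 1)).1 (by simpa using hdvd)).2
  obtain ⟨k, hk⟩ := ht
  have hkR : (t : 𝓞 K) ^ 2 + m = q * k := by exact_mod_cast congrArg (Int.cast (R := 𝓞 K)) hk
  set Q := Ideal.span {(q : 𝓞 K), t + w}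
  obtain ⟨Q', hQ'⟩ : Q ∣ Ideal.span {(q : 𝓞 K)} :=
    Ideal.dvd_iff_le.2 (Ideal.span_mono (by simp))
  have hnorm : Ideal.absNorm Q * Ideal.absNorm Q' = q ^ 2 := by
    have := h.absNorm_span_intCast hm q
    rw [Int.cast_natCast, hQ', map_mul] at this
    exact_mod_cast this
  refine ((hq.mul_eq_prime_sq_iff ?_ ?_).1 hnorm).1
  · intro hone
    rw [Ideal.absNorm_eq_one_iff, Ideal.eq_top_iff_one, Ideal.mem_span_pair] at hone
    obtain ⟨a, b, hab⟩ := hone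
    refine not_dvd (-t) ⟨-(a * (t - w) + b * k), ?_⟩
    push_cast
    linear_combination (t - w) * hab - b * hkR + b * h.sq_eq
  · intro hone
    rw [Ideal.absNorm_eq_one_iff] at hone
    rw [hone, Ideal.mul_top] at hQ'
    refine not_dvd t ?_
    rw [← Ideal.mem_span_singleton, hQ']
    exact Ideal.subset_span (by simp)

lemma isSquare_mk0_iff (h : IsSqrtNegGenerator p w) (hp : p.Prime) (hp4 : p % 4 = 1)
    {I : (Ideal (𝓞 K))⁰} (hI : Odd (Ideal.absNorm (I : Ideal (𝓞 K)))) :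
    IsSquare (ClassGroup.mk0 I) ↔ Ideal.absNorm (I : Ideal (𝓞 K)) % 4 = 1 := by
  refine ⟨h.absNorm_emod_four_eq_one_of_isSquare hp4 hI, fun hI4 => ?_⟩
  obtain ⟨q, t, hq, hq4, hdvd⟩ := exists_prime_emod_four_eq_three_dvd_sq_add hp hp4
  have hQ := h.absNorm_span_pair_of_dvd_sq_add hp.pos hq hdvd
  set Q := Ideal.span {(q : 𝓞 K), t + w}
  have hQ0 : Q ∈ (Ideal (𝓞 K))⁰ := mem_nonZeroDivisors_of_ne_zero fun h0 =>
    hq.ne_zero (by rw [← hQ, h0, map_zero])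
  have hIQ : Ideal.absNorm ((I * ⟨Q, hQ0⟩ : (Ideal (𝓞 K))⁰) : Ideal (𝓞 K)) % 4 = 3 := by
    rw [Submonoid.coe_mul, map_mul, hQ, Nat.mul_mod, hI4, hq4]
  by_contra hI_nonsquare
  refine h.not_isSquare_of_absNorm_emod_four_eq_three hp4 hIQ ?_
  rw [map_mul]
  exact isSquare_mul_of_not_isSquare (h.primeOverTwoClass_ne_one hp4 hp.ne_one)
    (fun c => h.sq_eq_one_iff hp hp4) hI_nonsquare
    (h.not_isSquare_of_absNorm_emod_four_eq_three hp4 (hQ ▸ hq4))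

lemma exists_absNorm_eq_and_mk0_sq_eq (h : IsSqrtNegGenerator m w) (hm : Squarefree m)
    (hm4 : m % 4 = 1) {n : ℕ} (hn : Odd n) {a : ℤ} (ha : a ^ 2 + m = 2 * n ^ 2) :
    ∃ J : (Ideal (𝓞 K))⁰, Ideal.absNorm (J : Ideal (𝓞 K)) = n ∧
      ClassGroup.mk0 J ^ 2 = primeOverTwoClass w := by
  obtain ⟨J, hmul⟩ : ∃ J, primeOverTwo w * J ^ 2 = Ideal.span {(a : 𝓞 K) + w} :=
    ⟨_, primeOverTwo_mul_span_pair_sq h.sq_eq hm hm4 (n := n) (by exact_mod_cast hn) ha⟩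
  have hnorm : Ideal.absNorm J = n := by
    have hsq := h.absNorm_span_add_mul (by omega) a 1
    rw [Int.cast_one, one_mul, ← hmul, map_mul, map_pow, h.absNorm_primeOverTwo hm4, one_pow,
      mul_one, ha] at hsq
    have hsq' : 2 * Ideal.absNorm J ^ 2 = 2 * n ^ 2 := by exact_mod_cast hsq
    exact Nat.pow_left_injective two_ne_zero (Nat.eq_of_mul_eq_mul_left two_pos hsq')
  have hJ0 : J ∈ (Ideal (𝓞 K))⁰ := mem_nonZeroDivisors_of_ne_zero fun h0 =>
    hn.pos.ne' (by rw [← hnorm, h0, map_zero])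
  refine ⟨⟨J, hJ0⟩, hnorm, ?_⟩
  have hclass : primeOverTwoClass w * ClassGroup.mk0 (⟨J, hJ0⟩ : (Ideal (𝓞 K))⁰) ^ 2 = 1 := by
    rw [primeOverTwoClass, ← map_pow]
    exact mk0_mul_mk0_eq_one_of_mul_eq_span hmul
  rw [eq_inv_of_mul_eq_one_right hclass, inv_eq_iff_mul_eq_one, ← sq,
    primeOverTwoClass_sq h.sq_eq hm4]

theorem forall_sq_eq_one_imp_iff_emod_four_eq_three (h : IsSqrtNegGenerator p w) (hp : p.Prime)
    (hp4 : p % 4 = 1) {n : ℕ} (hn : Odd n) {a : ℤ} (ha : a ^ 2 + p = 2 * n ^ 2) :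
    (∀ c : ClassGroup (𝓞 K), c ^ 2 = 1 → (∃ b, c = b ^ 4) → c = 1) ↔ n % 4 = 3 := by
  obtain ⟨J, hJ_norm, hJ_sq⟩ :=
    h.exists_absNorm_eq_and_mk0_sq_eq hp.prime.squarefree hp4 hn ha
  rw [forall_sq_eq_one_imp_iff_not_isSquare (h.primeOverTwoClass_ne_one hp4 hp.ne_one)
    (fun c => h.sq_eq_one_iff hp hp4) hJ_sq, h.isSquare_mk0_iff hp hp4 (hJ_norm ▸ hn), hJ_norm]
  rw [Nat.odd_iff] at hn
  omega

end NumberField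

end IsSqrtNegGenerator

/-- for a prime `p ≡ 1 (mod 8)` with `p = x² − 32y²` (`x, y > 0`) and `A` the
ideal class group of `ℚ(√−p)`, one has `x ≡ 3 (mod 4)` iff `A[2] ∩ 4A` is trivial
(i.e. `h₈(p) = 0`). -/
theorem stmt_15 (p : ℕ) (hp : p.Prime) (h8 : p % 8 = 1)
    (x y : ℕ) (hx : 0 < x) (hy : 0 < y)
    (hxy : (p : ℤ) = (x : ℤ) ^ 2 - 32 * (y : ℤ) ^ 2)
    (K : Type) [Field K] [NumberField K] (hdeg : Module.finrank ℚ K = 2)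
    (s : K) (hs : s ^ 2 = -(p : K)) :
    x % 4 = 3 ↔
      (∀ c : ClassGroup (𝓞 K), c ^ 2 = 1 → (∃ b, c = b ^ 4) → c = 1) := by
  have hp4 : p % 4 = 1 := by omega
  have hx_odd : Odd (x : ℤ) := (Int.odd_pow' two_ne_zero).1 (by rw [Int.odd_iff]; omega)
  have hn : Odd (x + 4 * y) :=
    ((Int.odd_coe_nat x).1 hx_odd).add_even ((by decide : Even 4).mul_right y)
  obtain ⟨w, hw⟩ := exists_isSqrtNegGenerator hdeg hp.prime.squarefree hp4 hs
  rw [hw.forall_sq_eq_one_imp_iff_emod_four_eq_three hp hp4 hn (a := x + 8 * y)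
    (by push_cast; linear_combination hxy)]
  omega
end
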